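/- arXiv:1807.10527 — 4 statements merged into one kernel-verified Lean document; each statement's English description precedes it below -/
import Mathlib

section
/- Let t ↦ Z_t be a bounded measurable family of 2d×m real matrices on [0,1] and, for s ∈ ℂ, let Φᵗ_s be the fundamental matrix of the complexified Jacobi equation, i.e. the unique absolutely continuous Mat_{2d×2d}(ℂ)-valued solution of dΦ/dt = Z_tˢ (Z_tˢ)ᵀ J Φ with Φ⁰_s = I. Then every entry of Φ¹_s is an entire function of s ∈ ℂ, and there exists a constant c > 0 such that ‖Φ¹_s‖ ≤ c·e^{c|s|} for all s ∈ ℂ. -/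
open MeasureTheory Filter Topology Matrix

noncomputable section

/-- The standard symplectic `2d × 2d` matrix `J = [[0, -I],[I, 0]]`, over `ℂ`. -/
def Jc (d : ℕ) : Matrix (Fin (d + d)) (Fin (d + d)) ℂ :=
  Matrix.reindex finSumFinEquiv finSumFinEquiv (Matrix.fromBlocks 0 (-1) 1 0)

/-- For `Z_t = (Y_t; X_t)`, the complex matrix `Z_tˢ = (s·Y_t; X_t)`:
rows in the top block get multiplied by `s`. -/
def Zs {d m : ℕ} (Z : ℝ → Matrix (Fin (d + d)) (Fin m) ℝ) (s : ℂ) (t : ℝ) :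
    Matrix (Fin (d + d)) (Fin m) ℂ :=
  Matrix.of fun i j => (if (i : ℕ) < d then s else 1) * (Z t i j : ℂ)

attribute [local instance] Matrix.normedAddCommGroup

/-! The Volterra operator `V_A x (t) = ∫ τ in a..t, A τ (x τ)` of a coefficient `A ∈ L^∞` satisfies
`‖V_A ^ n‖ ≤ ((b - a) ‖A‖) ^ n / n!`, so `1 - V_A` is invertible with inverse of norm at most
`exp ((b - a) ‖A‖)`. Inversion in a Banach algebra is holomorphic and `V_A` is linear in `A`, so
solutions of `x' = A x` depend holomorphically on `A`; the coefficient of the Jacobi equation is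
polynomial in `s`, hence its fundamental matrix is entire.

This coefficient is quadratic in `s`, so the norm bound alone would only give order two. With
`D = diag(s, 1)` one has `Zˢ = D Z` and `D J D = s J`, hence `D` carries solutions of
`x' = s (Z Zᵀ J) x`, whose coefficient is linear in `s`, to solutions of the Jacobi equation.

The integral equation alone does not say that a solution is continuous, since a divergent Bochner
integral is `0`. But once such an integral diverges it stays divergent, so just to the right of any
time it agrees with a continuous function; this propagates uniqueness from left to right. -/

section Propagator

open Set
open scoped ENNReal

section BanachAlgebra

variable {R : Type*} [NormedRing R] [CompleteSpace R] {x : R} {r : ℝ}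

lemma summable_pow_of_norm_pow_le_div_factorial (hx : ∀ n, ‖x ^ n‖ ≤ r ^ n / n.factorial) :
    Summable (x ^ ·) :=
  .of_norm_bounded (Real.summable_pow_div_factorial r) hx

lemma isUnit_one_sub_of_norm_pow_le_div_factorial (hx : ∀ n, ‖x ^ n‖ ≤ r ^ n / n.factorial) :
    IsUnit (1 - x) :=
  have hsum := summable_pow_of_norm_pow_le_div_factorial hx
  ⟨⟨1 - x, ∑' n, x ^ n, hsum.one_sub_mul_tsum_pow, hsum.tsum_pow_mul_one_sub⟩, rfl⟩

lemma norm_inverse_one_sub_le_exp (hx : ∀ n, ‖x ^ n‖ ≤ r ^ n / n.factorial) :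
    ‖Ring.inverse (1 - x)‖ ≤ Real.exp r := by
  have hsum := summable_pow_of_norm_pow_le_div_factorial hx
  have hinv : Ring.inverse (1 - x) = ∑' n, x ^ n :=
    Ring.inverse_unit ⟨1 - x, ∑' n, x ^ n, hsum.one_sub_mul_tsum_pow, hsum.tsum_pow_mul_one_sub⟩
  rw [hinv, Real.exp_eq_exp_ℝ]
  exact tsum_of_norm_bounded (NormedSpace.expSeries_div_hasSum_exp r) hx

lemma differentiable_inverse_one_sub {𝕜 G : Type*} [NontriviallyNormedField 𝕜] [NormedAlgebra 𝕜 R]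
    [NormedAddCommGroup G] [NormedSpace 𝕜 G] {f : G → R} (hf : Differentiable 𝕜 f)
    (hunit : ∀ g, IsUnit (1 - f g)) : Differentiable 𝕜 fun g => Ring.inverse (1 - f g) :=
  fun g => .comp (g := Ring.inverse) g (differentiableAt_inverse (hunit g)) ((hf g).const_sub 1)

end BanachAlgebra

section Lp

variable {E α : Type*} [NormedAddCommGroup E] [MeasurableSpace α] {μ : Measure α}

lemma ae_norm_le_norm_Lp_top (f : Lp E ∞ μ) : ∀ᵐ x ∂μ, ‖f x‖ ≤ ‖f‖ := by
  rw [Lp.norm_def, toReal_eLpNorm (Lp.aestronglyMeasurable f)]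
  exact ae_le_lpNorm_exponent_top (Lp.memLp f)

variable {𝕜 F : Type*} [NontriviallyNormedField 𝕜] [NormedSpace 𝕜 E] [NormedAddCommGroup F]
  [NormedSpace 𝕜 F]

lemma differentiable_compLp {G : Type*} [NormedAddCommGroup G] [NormedSpace 𝕜 G]
    {p : ℝ≥0∞} [Fact (1 ≤ p)] {L : G → E →L[𝕜] F}
    (hL : Differentiable 𝕜 L) (f : Lp E p μ) :
    Differentiable 𝕜 fun s => (L s).compLp f :=
  have hbdd : IsBoundedLinearMap 𝕜 fun L : E →L[𝕜] F => L.compLp f :=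
    IsLinearMap.with_bound
      ⟨fun L L' => L.add_compLp L' f, fun c L => L.smul_compLp c f⟩ ‖f‖
      fun L => (L.norm_compLp_le f).trans_eq (mul_comm _ _)
  hbdd.differentiable.comp hL

lemma integrableOn_clm_apply {a b : ℝ} {A : ℝ → E →L[𝕜] F} {x : ℝ → E}
    (hA : MemLp A ∞ (volume.restrict (Icc a b))) (hx : ContinuousOn x (Icc a b)) :
    IntegrableOn (fun τ => A τ (x τ)) (Icc a b) :=
  memLp_one_iff_integrable.1 <|
    (ContinuousLinearMap.id 𝕜 (E →L[𝕜] F)).memLp_of_bilin 1 hA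
      (memLp_one_iff_integrable.2 (hx.integrableOn_compact isCompact_Icc))

lemma intervalIntegrable_clm_apply {a b : ℝ} {A : ℝ → E →L[𝕜] F} {x : ℝ → E}
    (hA : MemLp A ∞ (volume.restrict (Icc a b))) (hx : ContinuousOn x (Icc a b)) {t : ℝ}
    (ht : t ∈ Icc a b) : IntervalIntegrable (fun τ => A τ (x τ)) volume a t :=
  ((integrableOn_clm_apply hA hx).mono_set
    (uIcc_of_le ht.1 ▸ Icc_subset_Icc_right ht.2)).intervalIntegrable

lemma integral_congr_ae_Icc {E : Type*} [NormedAddCommGroup E] [NormedSpace ℝ E] {a b t : ℝ}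
    {f g : ℝ → E} (hfg : f =ᵐ[volume.restrict (Icc a b)] g) (ht : t ∈ Icc a b) :
    ∫ τ in a..t, f τ = ∫ τ in a..t, g τ :=
  intervalIntegral.integral_congr_ae_restrict <| ae_mono (Measure.restrict_mono_set _ <|
    uIoc_of_le ht.1 ▸ Ioc_subset_Icc_self.trans (Icc_subset_Icc_right ht.2)) hfg

end Lp

section Volterra

variable {𝕜 E : Type*} [RCLike 𝕜] [NormedAddCommGroup E] [NormedSpace ℝ E] [NormedSpace 𝕜 E]
  {a b : ℝ}

/-- Essentially bounded coefficients `A` of a linear equation `x' = A x` on `[a, b]`. -/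
abbrev Coeff (𝕜 E : Type*) [RCLike 𝕜] [NormedAddCommGroup E] [NormedSpace 𝕜 E] (a b : ℝ) :
    Type _ :=
  Lp (E →L[𝕜] E) ∞ (volume.restrict (Icc a b))

lemma norm_integral_coeff_apply_le (A : Coeff 𝕜 E a b) {x : ℝ → E} {g : ℝ → ℝ}
    (hg : Continuous g) {t : ℝ} (ht : t ∈ Icc a b) (hx : ∀ τ ∈ Icc a b, ‖x τ‖ ≤ g τ) :
    ‖∫ τ in a..t, A τ (x τ)‖ ≤ ‖A‖ * ∫ τ in a..t, g τ := by
  rw [← intervalIntegral.integral_const_mul]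
  refine intervalIntegral.norm_integral_le_of_norm_le ht.1 ?_
    ((hg.const_mul ‖A‖).intervalIntegrable a t)
  filter_upwards [(ae_restrict_iff' measurableSet_Icc).1 (ae_norm_le_norm_Lp_top A)] with τ hA hτ
  have hτ' : τ ∈ Icc a b := ⟨hτ.1.le, hτ.2.trans ht.2⟩
  exact (A τ).le_of_opNorm_le_of_le (hA hτ') (hx τ hτ')

variable [SMulCommClass ℝ 𝕜 E]

/-- The Volterra operator `x ↦ (t ↦ ∫ τ in a..t, A τ (x τ))` on continuous functions, as a
bounded bilinear map of `A` and `x`. -/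
def volterra (hab : a ≤ b) : Coeff 𝕜 E a b →L[𝕜] C(Icc a b, E) →L[𝕜] C(Icc a b, E) :=
  have integrable (A : Coeff 𝕜 E a b) (x : C(Icc a b, E)) {t : ℝ} (ht : t ∈ Icc a b) :
      IntervalIntegrable (fun τ => A τ (x.IccExtend hab τ)) volume a t :=
    intervalIntegrable_clm_apply (Lp.memLp A) (x.IccExtend hab).continuous.continuousOn ht
  LinearMap.mkContinuous₂
    (LinearMap.mk₂ 𝕜
      (fun A x =>
        { toFun := fun t => ∫ τ in a..t, A τ (x.IccExtend hab τ)
          continuous_toFun := continuousOn_iff_continuous_domRestrict.1 <| uIcc_of_le hab ▸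
            intervalIntegral.continuousOn_primitive_interval'
              (integrable A x (right_mem_Icc.2 hab)) left_mem_uIcc })
      (fun A B x => ContinuousMap.ext fun t => by
        refine .trans (integral_congr_ae_Icc ?_ t.2)
          (intervalIntegral.integral_add (integrable A x t.2) (integrable B x t.2))
        filter_upwards [Lp.coeFn_add A B] with τ hτ
        simp only [hτ, Pi.add_apply, _root_.add_apply])
      (fun c A x => ContinuousMap.ext fun t => by
        refine .trans (integral_congr_ae_Icc ?_ t.2) (intervalIntegral.integral_smul c _)
        filter_upwards [Lp.coeFn_smul c A] with τ hτ
        simp only [hτ, Pi.smul_apply, _root_.smul_apply])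
      (fun A x y => ContinuousMap.ext fun t =>
        .trans (intervalIntegral.integral_congr fun τ _ => map_add (A τ) _ _)
          (intervalIntegral.integral_add (integrable A x t.2) (integrable A y t.2)))
      (fun c A x => ContinuousMap.ext fun t =>
        .trans (intervalIntegral.integral_congr fun τ _ => map_smul (A τ) c _)
          (intervalIntegral.integral_smul c _)))
    (b - a) fun A x => by
      have : 0 ≤ b - a := sub_nonneg.2 hab
      refine (ContinuousMap.norm_le _ (by positivity)).2 fun t => ?_
      calc ‖∫ τ in a..t, A τ (x.IccExtend hab τ)‖
        _ ≤ ‖A‖ * ∫ _ in a..t, ‖x‖ :=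
          norm_integral_coeff_apply_le A continuous_const t.2 fun τ _ =>
            x.norm_coe_le_norm (projIcc a b hab τ)
        _ = (t - a) * ‖A‖ * ‖x‖ := by rw [intervalIntegral.integral_const, smul_eq_mul]; ring
        _ ≤ (b - a) * ‖A‖ * ‖x‖ := by gcongr; exact t.2.2

lemma volterra_apply (hab : a ≤ b) (A : Coeff 𝕜 E a b) (x : C(Icc a b, E)) (t : Icc a b) :
    volterra hab A x t = ∫ τ in a..t, A τ (x.IccExtend hab τ) := rfl

lemma norm_volterra_pow_apply_le (hab : a ≤ b) (A : Coeff 𝕜 E a b) (x : C(Icc a b, E)) (n : ℕ)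
    (t : Icc a b) :
    ‖(volterra hab A ^ n) x t‖ ≤ (‖A‖ * (t - a)) ^ n / n.factorial * ‖x‖ := by
  induction n generalizing t with
  | zero => simpa using x.norm_coe_le_norm t
  | succ n ih =>
    have hn : (n.factorial : ℝ) ≠ 0 := by positivity
    have hn' : (n : ℝ) + 1 ≠ 0 := by positivity
    have h_int : ∫ τ in a..t, (τ - a) ^ n = (t - a) ^ (n + 1) / (n + 1) := by
      rw [intervalIntegral.integral_comp_sub_right fun τ => τ ^ n, integral_pow]
      simp
    rw [pow_succ', mul_apply_eq_comp, volterra_apply]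
    calc ‖∫ τ in a..t, A τ (((volterra hab A ^ n) x).IccExtend hab τ)‖
      _ ≤ ‖A‖ * ∫ τ in a..t, ‖A‖ ^ n / n.factorial * ‖x‖ * (τ - a) ^ n := by
        refine norm_integral_coeff_apply_le A (by fun_prop) t.2 fun τ hτ => ?_
        rw [ContinuousMap.coe_IccExtend, IccExtend_of_mem _ _ hτ]
        exact (ih ⟨τ, hτ⟩).trans_eq (by rw [mul_pow]; ring)
      _ = (‖A‖ * (t - a)) ^ (n + 1) / (n + 1).factorial * ‖x‖ := by
        rw [intervalIntegral.integral_const_mul, h_int, Nat.factorial_succ, mul_pow, pow_succ' ‖A‖]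
        push_cast
        field_simp

lemma norm_volterra_pow_le (hab : a ≤ b) (A : Coeff 𝕜 E a b) (n : ℕ) :
    ‖volterra hab A ^ n‖ ≤ ((b - a) * ‖A‖) ^ n / n.factorial := by
  have : 0 ≤ b - a := sub_nonneg.2 hab
  refine ContinuousLinearMap.opNorm_le_bound _ (by positivity) fun x =>
    (ContinuousMap.norm_le _ (by positivity)).2 fun t =>
      (norm_volterra_pow_apply_le hab A x n t).trans ?_
  have hta : 0 ≤ (t : ℝ) - a := sub_nonneg.2 t.2.1
  rw [mul_comm (b - a)]
  gcongr
  exact t.2.2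

variable [CompleteSpace E]

lemma isUnit_one_sub_volterra (hab : a ≤ b) (A : Coeff 𝕜 E a b) : IsUnit (1 - volterra hab A) :=
  isUnit_one_sub_of_norm_pow_le_div_factorial (R := C(Icc a b, E) →L[𝕜] C(Icc a b, E))
    (norm_volterra_pow_le hab A)

/-- The propagator of `x' = A x` on `[a, b]`: it sends `x₀` to the solution `x` with `x a = x₀`,
constructed as `(1 - V)⁻¹ x₀` where `V` is the Volterra operator of `A`. -/
def propagator (hab : a ≤ b) (A : Coeff 𝕜 E a b) : E →L[𝕜] C(Icc a b, E) :=
  Ring.inverse (1 - volterra hab A) ∘L ContinuousLinearMap.const 𝕜 (Icc a b)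

lemma eq_propagator_iff {hab : a ≤ b} {A : Coeff 𝕜 E a b} {x₀ : E} {x : C(Icc a b, E)} :
    x = propagator hab A x₀ ↔ ∀ t, x t = x₀ + volterra hab A x t := by
  have hunit := isUnit_one_sub_volterra hab A
  have hinv : x = propagator hab A x₀ ↔
      (1 - volterra hab A) x = ContinuousLinearMap.const 𝕜 (Icc a b) x₀ := by
    constructor
    · rintro rfl
      exact DFunLike.congr_fun (Ring.mul_inverse_cancel _ hunit) _
    · intro hx
      rw [propagator, ContinuousLinearMap.comp_apply, ← hx]
      exact (DFunLike.congr_fun (Ring.inverse_mul_cancel _ hunit) x).symm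
  rw [hinv, ContinuousMap.ext_iff]
  exact forall_congr' fun t => sub_eq_iff_eq_add

lemma norm_propagator_apply_le (hab : a ≤ b) (A : Coeff 𝕜 E a b) (x₀ : E) :
    ‖propagator hab A x₀‖ ≤ Real.exp ((b - a) * ‖A‖) * ‖x₀‖ :=
  ContinuousLinearMap.le_of_opNorm_le_of_le (Ring.inverse (1 - volterra hab A))
    (norm_inverse_one_sub_le_exp (R := C(Icc a b, E) →L[𝕜] C(Icc a b, E))
      (norm_volterra_pow_le hab A))
    ((ContinuousMap.norm_le _ (norm_nonneg x₀)).2 fun _ => le_rfl)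

lemma differentiable_propagator (hab : a ≤ b) :
    Differentiable 𝕜 (propagator hab : Coeff 𝕜 E a b → E →L[𝕜] C(Icc a b, E)) := fun A =>
  have hvol : Differentiable 𝕜 (volterra hab : Coeff 𝕜 E a b →L[𝕜] _) :=
    (volterra (𝕜 := 𝕜) (E := E) hab).differentiable
  (differentiable_inverse_one_sub (𝕜 := 𝕜) (R := C(Icc a b, E) →L[𝕜] C(Icc a b, E)) hvol
    (isUnit_one_sub_volterra hab) A).clm_comp (differentiableAt_const _)

lemma differentiable_propagator_apply {G : Type*} [NormedAddCommGroup G] [NormedSpace 𝕜 G]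
    (hab : a ≤ b) {A : G → Coeff 𝕜 E a b} (hA : Differentiable 𝕜 A) (x₀ : E) (t : Icc a b) :
    Differentiable 𝕜 fun s => propagator hab (A s) x₀ t :=
  have hx : Differentiable 𝕜 fun s => propagator hab (A s) x₀ :=
    .clm_apply (.comp (g := propagator hab) (differentiable_propagator hab) hA)
      (differentiable_const x₀)
  (ContinuousMap.evalCLM 𝕜 t : C(Icc a b, E) →L[𝕜] E).differentiable.comp hx

variable {hab : a ≤ b}

lemma eq_propagator_of_continuousOn {A : ℝ → E →L[𝕜] E}
    (hA : MemLp A ∞ (volume.restrict (Icc a b))) {x₀ : E} {x : ℝ → E}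
    (hx : ContinuousOn x (Icc a b))
    (hsol : ∀ t ∈ Icc a b, x t = x₀ + ∫ τ in a..t, A τ (x τ)) (t : Icc a b) :
    x t = propagator hab hA.toLp x₀ t := by
  let X : C(Icc a b, E) := ⟨(Icc a b).domRestrict x, continuousOn_iff_continuous_domRestrict.1 hx⟩
  suffices X = propagator hab hA.toLp x₀ from DFunLike.congr_fun this t
  refine eq_propagator_iff.2 fun t => (hsol t t.2).trans <| congrArg (x₀ + ·) <|
    integral_congr_ae_Icc ?_ t.2
  filter_upwards [hA.coeFn_toLp, ae_restrict_mem measurableSet_Icc] with τ hAτ hτ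
  rw [hAτ, ContinuousMap.coe_IccExtend, IccExtend_of_mem _ _ hτ]
  rfl

lemma apply_propagator_of_intertwine {E' : Type*} [NormedAddCommGroup E'] [NormedSpace ℝ E']
    [NormedSpace 𝕜 E'] [SMulCommClass ℝ 𝕜 E'] [CompleteSpace E'] {A : Coeff 𝕜 E a b}
    {A' : Coeff 𝕜 E' a b} {T : E →L[𝕜] E'}
    (hT : ∀ᵐ τ ∂volume.restrict (Icc a b), T ∘L A τ = A' τ ∘L T) (x₀ : E) (t : Icc a b) :
    T (propagator hab A x₀ t) = propagator hab A' (T x₀) t := by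
  set x := propagator hab A x₀ with hx
  suffices T.compLeftContinuous 𝕜 _ x = propagator hab A' (T x₀) from DFunLike.congr_fun this t
  refine eq_propagator_iff.2 fun t => ?_
  have h_int : IntervalIntegrable (fun τ => A τ (x.IccExtend hab τ)) volume a t :=
    intervalIntegrable_clm_apply (Lp.memLp A) (x.IccExtend hab).continuous.continuousOn t.2
  calc T (x t)
    _ = T x₀ + ∫ τ in a..t, T (A τ (x.IccExtend hab τ)) := by
      rw [eq_propagator_iff.1 hx t, map_add, volterra_apply, T.intervalIntegral_comp_comm h_int]
    _ = T x₀ + volterra hab A' (T.compLeftContinuous 𝕜 _ x) t := by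
      refine congrArg (T x₀ + ·) (integral_congr_ae_Icc ?_ t.2)
      filter_upwards [hT] with τ hτ using DFunLike.congr_fun hτ _

end Volterra

section CoordinateSolution

lemma eventually_exists_continuousOn_eqOn_primitive {F : Type*} [NormedAddCommGroup F]
    [NormedSpace ℝ F] (f : ℝ → F) {a T : ℝ} (haT : a ≤ T) :
    ∀ᶠ v in 𝓝[>] T, ∃ g : ℝ → F, ContinuousOn g (Icc T v) ∧
      EqOn (fun t => ∫ τ in a..t, f τ) g (Ioc T v) := by
  by_cases h : ∃ v > T, IntervalIntegrable f volume a v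
  · obtain ⟨v, hv, h_int⟩ := h
    filter_upwards [Ioc_mem_nhdsGT hv] with w hw
    refine ⟨_, ?_, eqOn_refl _ _⟩
    exact (intervalIntegral.continuousOn_primitive_interval' h_int left_mem_uIcc).mono <|
      uIcc_of_le (haT.trans hv.le) ▸ Icc_subset_Icc haT hw.2
  · push Not at h
    exact .of_forall fun v =>
      ⟨0, continuousOn_const, fun t ht => intervalIntegral.integral_undef (h t ht.1)⟩

variable {𝕜 ι F : Type*} [RCLike 𝕜] [NormedAddCommGroup F] [NormedSpace ℝ F]
  [NormedSpace 𝕜 F] {a b : ℝ} {A : ℝ → (ι → F) →L[𝕜] (ι → F)} {x₀ : ι → F} {x y : ℝ → ι → F}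

/-- A solution on `[a, b]` of the coordinates of `x = x₀ + ∫ A x`. Since a Bochner integral that
diverges is `0`, this does not say that `x` is continuous or that `A x` is integrable. -/
def IsCoordSolution (A : ℝ → (ι → F) →L[𝕜] (ι → F)) (x₀ : ι → F) (x : ℝ → ι → F) (a b : ℝ) :
    Prop :=
  ∀ t ∈ Icc a b, ∀ i, x t i = x₀ i + ∫ τ in a..t, A τ (x τ) i

namespace IsCoordSolution

lemma congr_ae {A' : ℝ → (ι → F) →L[𝕜] (ι → F)} (hx : IsCoordSolution A x₀ x a b)
    (hA : A =ᵐ[volume.restrict (Icc a b)] A') : IsCoordSolution A' x₀ x a b := fun t ht i => by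
  rw [hx t ht i]
  refine congrArg (x₀ i + ·) (integral_congr_ae_Icc ?_ ht)
  filter_upwards [hA] with τ hτ
  rw [hτ]

lemma mono (hx : IsCoordSolution A x₀ x a b) {v : ℝ} (hv : v ≤ b) : IsCoordSolution A x₀ x a v :=
  fun t ht => hx t (Icc_subset_Icc_right hv ht)

lemma eqOn_Icc_of_eqOn_Ico (hx : IsCoordSolution A x₀ x a b) (hy : IsCoordSolution A x₀ y a b)
    {T : ℝ} (hT : T ∈ Icc a b) (hxy : EqOn x y (Ico a T)) : EqOn x y (Icc a T) := by
  have hxT : x T = y T := funext fun i => by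
    rw [hx T hT i, hy T hT i, intervalIntegral.integral_congr_Ioo_of_le hT.1]
    exact fun τ hτ => by simp only [hxy (Ioo_subset_Ico_self hτ)]
  exact fun t ht => ht.2.lt_or_eq.elim (fun h => hxy ⟨ht.1, h⟩) fun h => h ▸ hxT

variable [Fintype ι]

lemma continuousOn_of_integrableOn (hx : IsCoordSolution A x₀ x a b) (hab : a ≤ b)
    (h_int : IntegrableOn (fun τ => A τ (x τ)) (Icc a b)) : ContinuousOn x (Icc a b) :=
  continuousOn_pi.2 fun i => by
    refine ContinuousOn.congr ?_ fun t ht => hx t ht i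
    rw [← uIcc_of_le hab]
    exact continuousOn_const.add <| intervalIntegral.continuousOn_primitive_interval'
      ((intervalIntegrable_iff_integrableOn_Icc_of_le hab).2 (h_int.eval i)) left_mem_uIcc

lemma exists_continuousOn_of_lt (hx : IsCoordSolution A x₀ x a b)
    (hA : MemLp A ∞ (volume.restrict (Icc a b))) {T : ℝ} (hT : T ∈ Ico a b)
    (hcont : ContinuousOn x (Icc a T)) : ∃ v ∈ Ioc T b, ContinuousOn x (Icc a v) := by
  have hright := eventually_all.2 fun i =>
    eventually_exists_continuousOn_eqOn_primitive (fun τ => A τ (x τ) i) hT.1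
  obtain ⟨v, hg, hTv, hvb⟩ := (hright.and (Ioc_mem_nhdsGT hT.2)).exists
  choose g hgcont hg using hg
  have hxg : EqOn x (fun t i => x₀ i + g i t) (Ioc T v) := fun t ht => funext fun i =>
    (hx t ⟨hT.1.trans ht.1.le, ht.2.trans hvb⟩ i).trans <| congrArg (x₀ i + ·) (hg i ht)
  have hleft : IntegrableOn (fun τ => A τ (x τ)) (Icc a T) := integrableOn_clm_apply
    (hA.mono_measure (Measure.restrict_mono_set _ (Icc_subset_Icc_right hT.2.le))) hcont
  have hright : IntegrableOn (fun τ => A τ (x τ)) (Ioc T v) :=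
    ((integrableOn_clm_apply
      (hA.mono_measure (Measure.restrict_mono_set _ (Icc_subset_Icc hT.1 hvb)))
      (continuousOn_pi.2 fun i => continuousOn_const.add (hgcont i))).mono_set
        Ioc_subset_Icc_self).congr_fun (fun τ hτ => congrArg (A τ) (hxg hτ).symm) measurableSet_Ioc
  refine ⟨v, ⟨hTv, hvb⟩, (hx.mono hvb).continuousOn_of_integrableOn (hT.1.trans hTv.le) ?_⟩
  exact Icc_union_Ioc_eq_Icc hT.1 hTv.le ▸ hleft.union hright

variable [CompleteSpace F]

lemma iff_of_continuousOn (hA : MemLp A ∞ (volume.restrict (Icc a b)))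
    (hcont : ContinuousOn x (Icc a b)) :
    IsCoordSolution A x₀ x a b ↔ ∀ t ∈ Icc a b, x t = x₀ + ∫ τ in a..t, A τ (x τ) := by
  refine forall₂_congr fun t ht => funext_iff.trans (forall_congr' fun i => ?_) |>.symm
  rw [Pi.add_apply]
  exact ((ContinuousLinearMap.proj (R := 𝕜) (φ := fun _ => F) i).intervalIntegral_comp_comm
    (intervalIntegrable_clm_apply hA hcont ht)).symm ▸ Iff.rfl

variable [SMulCommClass ℝ 𝕜 F]

lemma of_propagator (hab : a ≤ b) (A : Coeff 𝕜 (ι → F) a b) (x₀ : ι → F) :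
    IsCoordSolution A x₀ ((propagator hab A x₀).IccExtend hab) a b := by
  refine (iff_of_continuousOn (Lp.memLp A) (ContinuousMap.continuous _).continuousOn).2
    fun t ht => ?_
  calc (propagator hab A x₀).IccExtend hab t
    _ = propagator hab A x₀ ⟨t, ht⟩ := IccExtend_of_mem _ _ ht
    _ = x₀ + ∫ τ in a..t, A τ ((propagator hab A x₀).IccExtend hab τ) :=
      eq_propagator_iff.1 rfl ⟨t, ht⟩

lemma eqOn_of_continuousOn (hx : IsCoordSolution A x₀ x a b) (hy : IsCoordSolution A x₀ y a b)
    (hA : MemLp A ∞ (volume.restrict (Icc a b))) (hxcont : ContinuousOn x (Icc a b))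
    (hycont : ContinuousOn y (Icc a b)) : EqOn x y (Icc a b) := fun t ht =>
  (eq_propagator_of_continuousOn (hab := ht.1.trans ht.2) hA hxcont
    ((iff_of_continuousOn hA hxcont).1 hx) ⟨t, ht⟩).trans
      (eq_propagator_of_continuousOn hA hycont ((iff_of_continuousOn hA hycont).1 hy) ⟨t, ht⟩).symm

theorem eqOn_of_continuousOn_right (hx : IsCoordSolution A x₀ x a b)
    (hy : IsCoordSolution A x₀ y a b) (hA : MemLp A ∞ (volume.restrict (Icc a b)))
    (hycont : ContinuousOn y (Icc a b)) : EqOn x y (Icc a b) := by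
  by_contra hne
  obtain ⟨v, hv, hxyv⟩ : ∃ v ∈ Icc a b, x v ≠ y v := by
    simpa only [EqOn, not_forall, exists_prop] using hne
  let B := {t ∈ Icc a b | x t ≠ y t}
  have hvB : v ∈ B := ⟨hv, hxyv⟩
  have hB : BddBelow B := ⟨a, fun t ht => ht.1.1⟩
  have hT : sInf B ∈ Icc a b := ⟨le_csInf ⟨v, hvB⟩ fun t ht => ht.1.1, (csInf_le hB hvB).trans hv.2⟩
  have hle : EqOn x y (Icc a (sInf B)) := hx.eqOn_Icc_of_eqOn_Ico hy hT fun t ht =>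
    of_not_not fun h => notMem_of_lt_csInf ht.2 hB ⟨⟨ht.1, ht.2.le.trans hT.2⟩, h⟩
  have hTb : sInf B < b := hT.2.lt_of_ne fun h => hxyv (hle (h ▸ hv))
  obtain ⟨w, hw, hxcont⟩ := hx.exists_continuousOn_of_lt hA ⟨hT.1, hTb⟩
    ((hycont.mono (Icc_subset_Icc_right hT.2)).congr hle)
  have hEq : EqOn x y (Icc a w) := (hx.mono hw.2).eqOn_of_continuousOn (hy.mono hw.2)
    (hA.mono_measure (Measure.restrict_mono_set _ (Icc_subset_Icc_right hw.2))) hxcont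
    (hycont.mono (Icc_subset_Icc_right hw.2))
  exact hw.1.not_ge <| le_csInf ⟨v, hvB⟩ fun t ht =>
    le_of_not_ge fun htw => ht.2 (hEq ⟨ht.1.1, htw⟩)

theorem eq_propagator {hab : a ≤ b} {A : Coeff 𝕜 (ι → F) a b} (hx : IsCoordSolution A x₀ x a b)
    (t : Icc a b) : x t = propagator hab A x₀ t :=
  calc x t
    _ = (propagator hab A x₀).IccExtend hab t := hx.eqOn_of_continuousOn_right
      (.of_propagator hab A x₀) (Lp.memLp A) (ContinuousMap.continuous _).continuousOn t.2
    _ = propagator hab A x₀ t := IccExtend_of_mem _ _ t.2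

end IsCoordSolution

end CoordinateSolution

section SandwichCoeff

variable {𝕜 E : Type*} [RCLike 𝕜] [NormedAddCommGroup E] [NormedSpace 𝕜 E] {a b : ℝ}

/-- The coefficient `τ ↦ P A(τ) Q`. -/
def sandwichCoeff (P Q : E →L[𝕜] E) (A : Coeff 𝕜 E a b) : Coeff 𝕜 E a b :=
  (ContinuousLinearMap.mulLeftRight 𝕜 (E →L[𝕜] E) P Q).compLp A

lemma coeFn_sandwichCoeff (P Q : E →L[𝕜] E) (A : Coeff 𝕜 E a b) :
    sandwichCoeff P Q A =ᵐ[volume.restrict (Icc a b)] fun τ => P ∘L A τ ∘L Q :=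
  ContinuousLinearMap.coeFn_compLp _ _

lemma differentiable_sandwichCoeff {G : Type*} [NormedAddCommGroup G] [NormedSpace 𝕜 G]
    {P Q : G → E →L[𝕜] E} (hP : Differentiable 𝕜 P) (hQ : Differentiable 𝕜 Q)
    (A : Coeff 𝕜 E a b) : Differentiable 𝕜 fun s => sandwichCoeff (P s) (Q s) A :=
  differentiable_compLp
    (((ContinuousLinearMap.mulLeftRight 𝕜 (E →L[𝕜] E)).differentiable.comp hP).clm_apply hQ) A

end SandwichCoeff

section MatrixCLM

variable {𝕜 n : Type*} [RCLike 𝕜] [Fintype n] [DecidableEq n]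

/-- The action `v ↦ M *ᵥ v` of a square matrix, as a continuous linear map for the sup norm. -/
def matrixCLM : Matrix n n 𝕜 →ₗ[𝕜] (n → 𝕜) →L[𝕜] (n → 𝕜) :=
  LinearMap.toContinuousLinearMap.toLinearMap ∘ₗ Matrix.toLin'.toLinearMap

lemma matrixCLM_apply (M : Matrix n n 𝕜) (v : n → 𝕜) : matrixCLM M v = M *ᵥ v := rfl

lemma matrixCLM_mul (M N : Matrix n n 𝕜) : matrixCLM (M * N) = matrixCLM M ∘L matrixCLM N :=
  ContinuousLinearMap.ext fun v => (mulVec_mulVec v M N).symm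

lemma matrixCLM_one : matrixCLM (1 : Matrix n n 𝕜) = .id 𝕜 (n → 𝕜) :=
  ContinuousLinearMap.ext one_mulVec

attribute [local instance] Matrix.normedSpace

lemma memLp_matrixCLM {α : Type*} [MeasurableSpace α] {μ : Measure α} {p : ℝ≥0∞}
    {M : α → Matrix n n 𝕜} (hM : ∀ i j, MemLp (fun t => M t i j) p μ) :
    MemLp (fun t => matrixCLM (M t)) p μ :=
  (matrixCLM (𝕜 := 𝕜) (n := n)).toContinuousLinearMap.comp_memLp'
    (.of_eval fun i => .of_eval (hM i))

lemma differentiable_matrixCLM {G : Type*} [NormedAddCommGroup G] [NormedSpace 𝕜 G]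
    {M : G → Matrix n n 𝕜} (hM : ∀ i j, Differentiable 𝕜 fun s => M s i j) :
    Differentiable 𝕜 fun s => matrixCLM (M s) :=
  (matrixCLM (𝕜 := 𝕜) (n := n)).toContinuousLinearMap.differentiable.comp
    (differentiable_pi.2 fun i => differentiable_pi.2 (hM i))

variable {κ : Type*} [Fintype κ]

/-- The Gram matrix `M Mᵀ` of a real matrix, acting on complex vectors. -/
def gramCLM (M : Matrix n κ ℝ) : (n → ℂ) →L[ℂ] (n → ℂ) :=
  matrixCLM ((M * Mᵀ).map Complex.ofReal)

lemma memLp_top_gramCLM {S : Set ℝ} (hS : MeasurableSet S) {Z : ℝ → Matrix n κ ℝ}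
    (hZmeas : ∀ i j, Measurable fun t => Z t i j)
    (hZbdd : ∃ C : ℝ, ∀ t ∈ S, ∀ i j, |Z t i j| ≤ C) :
    MemLp (fun τ => gramCLM (Z τ)) ∞ (volume.restrict S) := by
  obtain ⟨C, hC⟩ := hZbdd
  have hZ (i j) : MemLp (fun t => Z t i j) ∞ (volume.restrict S) := by
    refine memLp_top_of_bound (hZmeas i j).aestronglyMeasurable C ?_
    filter_upwards [ae_restrict_mem hS] with t ht using hC t ht i j
  exact memLp_matrixCLM fun i j => .ofReal <|
    memLp_finsetSum (f := fun k τ => Z τ i k * Z τ j k) .univ fun k _ => (hZ j k).mul (hZ i k)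

end MatrixCLM

section Jacobi

variable {d m : ℕ} {a b : ℝ}

/-- The matrix `diag(s, …, s, 1, …, 1)`, so that `Z_tˢ = rowScale d s * Z_t`. -/
def rowScale (d : ℕ) (s : ℂ) : Matrix (Fin (d + d)) (Fin (d + d)) ℂ :=
  Matrix.diagonal fun i => if (i : ℕ) < d then s else 1

lemma Zs_eq_rowScale_mul (Z : ℝ → Matrix (Fin (d + d)) (Fin m) ℝ) (s : ℂ) (t : ℝ) :
    Zs Z s t = rowScale d s * (Z t).map Complex.ofReal := by
  ext i j
  simp only [Zs, rowScale, of_apply, Matrix.diagonal_mul, map_apply]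

lemma transpose_rowScale (s : ℂ) : (rowScale d s)ᵀ = rowScale d s := diagonal_transpose _

lemma rowScale_one : rowScale d 1 = 1 := by simp [rowScale]

lemma rowScale_mul_Jc_mul_rowScale (s : ℂ) : rowScale d s * Jc d * rowScale d s = s • Jc d := by
  ext i j
  simp only [rowScale, Jc, mul_diagonal, Matrix.diagonal_mul, Matrix.smul_apply]
  refine Fin.addCases (fun i => ?_) (fun i => ?_) i <;>
  refine Fin.addCases (fun j => ?_) (fun j => ?_) j <;>
  simp [-Fin.natAdd_eq_addNat, mul_comm]

lemma differentiable_matrixCLM_rowScale (d : ℕ) :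
    Differentiable ℂ fun s => matrixCLM (rowScale d s) := by
  refine differentiable_matrixCLM fun i j => ?_
  by_cases hij : i = j <;> by_cases hi : (j : ℕ) < d <;> simp [rowScale, hij, hi]

/-- The coefficient `D G D J`, `D = rowScale d s`, of the Jacobi equation when `G = Z Zᵀ`. -/
def jacobiCoeff (G : Coeff ℂ (Fin (d + d) → ℂ) a b) (s : ℂ) : Coeff ℂ (Fin (d + d) → ℂ) a b :=
  sandwichCoeff (matrixCLM (rowScale d s)) (matrixCLM (rowScale d s * Jc d)) G

lemma differentiable_jacobiCoeff (G : Coeff ℂ (Fin (d + d) → ℂ) a b) :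
    Differentiable ℂ (jacobiCoeff G) := by
  have hD := differentiable_matrixCLM_rowScale d
  refine differentiable_sandwichCoeff hD ?_ G
  simp only [matrixCLM_mul]
  exact hD.clm_comp (differentiable_const _)

lemma ae_eq_jacobiCoeff {Z : ℝ → Matrix (Fin (d + d)) (Fin m) ℝ}
    {G : Coeff ℂ (Fin (d + d) → ℂ) a b}
    (hG : G =ᵐ[volume.restrict (Icc a b)] fun τ => gramCLM (Z τ)) (s : ℂ) :
    (fun τ => matrixCLM (Zs Z s τ * (Zs Z s τ)ᵀ * Jc d)) =ᵐ[volume.restrict (Icc a b)]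
      jacobiCoeff G s := by
  filter_upwards [hG, coeFn_sandwichCoeff _ _ G] with τ hGτ hτ
  have hmap : (Z τ * (Z τ)ᵀ).map Complex.ofReal =
      (Z τ).map Complex.ofReal * ((Z τ).map Complex.ofReal)ᵀ :=
    Matrix.map_mul (f := Complex.ofRealHom)
  rw [jacobiCoeff, hτ, hGτ, gramCLM, ← matrixCLM_mul, ← matrixCLM_mul, Zs_eq_rowScale_mul,
    transpose_mul, transpose_rowScale, hmap]
  simp only [Matrix.mul_assoc]

lemma eq_propagator_jacobiCoeff {hab : a ≤ b} {Z : ℝ → Matrix (Fin (d + d)) (Fin m) ℝ}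
    {G : Coeff ℂ (Fin (d + d) → ℂ) a b}
    (hG : G =ᵐ[volume.restrict (Icc a b)] fun τ => gramCLM (Z τ)) {s : ℂ}
    {x₀ : Fin (d + d) → ℂ} {x : ℝ → Fin (d + d) → ℂ}
    (hx : ∀ t ∈ Icc a b, ∀ i,
      x t i = x₀ i + ∫ τ in a..t, ((Zs Z s τ * (Zs Z s τ)ᵀ * Jc d) *ᵥ x τ) i)
    (t : Icc a b) : x t = propagator hab (jacobiCoeff G s) x₀ t :=
  have hsol : IsCoordSolution (𝕜 := ℂ) (F := ℂ)
    (fun τ => matrixCLM (Zs Z s τ * (Zs Z s τ)ᵀ * Jc d)) x₀ x a b := hx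
  (hsol.congr_ae (ae_eq_jacobiCoeff hG s)).eq_propagator t

lemma ae_rowScale_comp_jacobiCoeff (G : Coeff ℂ (Fin (d + d) → ℂ) a b) (s : ℂ) :
    ∀ᵐ τ ∂volume.restrict (Icc a b),
      matrixCLM (rowScale d s) ∘L (s • jacobiCoeff G 1) τ =
        jacobiCoeff G s τ ∘L matrixCLM (rowScale d s) := by
  have hcoe (w : ℂ) : jacobiCoeff G w =ᵐ[volume.restrict (Icc a b)] fun τ =>
      matrixCLM (rowScale d w) ∘L G τ ∘L matrixCLM (rowScale d w * Jc d) :=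
    coeFn_sandwichCoeff _ _ G
  filter_upwards [hcoe 1, hcoe s, Lp.coeFn_smul s (jacobiCoeff G 1)] with τ h1 hs hsmul
  have hJ : matrixCLM (rowScale d s * Jc d) ∘L matrixCLM (rowScale d s) = s • matrixCLM (Jc d) := by
    rw [← matrixCLM_mul, rowScale_mul_Jc_mul_rowScale, map_smul]
  rw [hsmul, Pi.smul_apply, h1, hs, rowScale_one, matrixCLM_one, Matrix.one_mul,
    ContinuousLinearMap.id_comp, ContinuousLinearMap.comp_assoc, ContinuousLinearMap.comp_assoc,
    hJ, ContinuousLinearMap.comp_smul, ContinuousLinearMap.comp_smul,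
    ContinuousLinearMap.comp_smul]

lemma norm_propagator_jacobiCoeff_single_le (hab : a ≤ b) (G : Coeff ℂ (Fin (d + d) → ℂ) a b)
    {s : ℂ} (hs : 1 ≤ ‖s‖) (j : Fin (d + d)) (t : Icc a b) :
    ‖propagator hab (jacobiCoeff G s) (Pi.single j 1) t‖ ≤
      ‖s‖ * Real.exp ((b - a) * ‖jacobiCoeff G 1‖ * ‖s‖) := by
  set w : ℂ := if (j : ℕ) < d then s else 1 with hw
  have hw1 : 1 ≤ ‖w‖ := by rw [hw]; split_ifs <;> simp [hs]
  have hDe : matrixCLM (rowScale d s) (Pi.single j 1) = w • Pi.single j 1 := by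
    rw [matrixCLM_apply, rowScale, diagonal_mulVec_single, ← Pi.single_smul, smul_eq_mul]
  have hD (v : Fin (d + d) → ℂ) : ‖matrixCLM (rowScale d s) v‖ ≤ ‖s‖ * ‖v‖ := by
    refine (pi_norm_le_iff_of_nonneg (by positivity)).2 fun i => ?_
    rw [matrixCLM_apply, rowScale, mulVec_diagonal, norm_mul]
    gcongr
    · split_ifs <;> simp [hs]
    · exact norm_le_pi_norm v i
  calc ‖propagator hab (jacobiCoeff G s) (Pi.single j 1) t‖
    _ ≤ ‖w‖ * ‖propagator hab (jacobiCoeff G s) (Pi.single j 1) t‖ :=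
      le_mul_of_one_le_left (norm_nonneg _) hw1
    _ = ‖matrixCLM (rowScale d s) (propagator hab (s • jacobiCoeff G 1) (Pi.single j 1) t)‖ := by
      rw [apply_propagator_of_intertwine (ae_rowScale_comp_jacobiCoeff G s), hDe, map_smul,
        ContinuousMap.smul_apply, norm_smul]
    _ ≤ ‖s‖ * ‖propagator hab (s • jacobiCoeff G 1) (Pi.single j 1) t‖ := hD _
    _ ≤ ‖s‖ * Real.exp ((b - a) * ‖jacobiCoeff G 1‖ * ‖s‖) := by
      gcongr
      refine (ContinuousMap.norm_coe_le_norm _ t).trans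
        ((norm_propagator_apply_le hab _ _).trans_eq ?_)
      rw [Pi.norm_single, norm_one, mul_one, norm_smul, mul_comm ‖s‖, mul_assoc]

end Jacobi

lemma exists_norm_le_mul_exp {E F : Type*} [SeminormedAddCommGroup E] [ProperSpace E]
    [SeminormedAddCommGroup F] {f : E → F} (hf : Continuous f) {K : ℝ}
    (hK : ∀ s, 1 ≤ ‖s‖ → ‖f s‖ ≤ ‖s‖ * Real.exp (K * ‖s‖)) :
    ∃ c : ℝ, 0 < c ∧ ∀ s, ‖f s‖ ≤ c * Real.exp (c * ‖s‖) := by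
  obtain ⟨C, hC⟩ := (isCompact_closedBall (0 : E) 1).exists_bound_of_continuousOn hf.continuousOn
  have hC0 : 0 ≤ C := (norm_nonneg _).trans (hC 0 (by simp))
  refine ⟨C + |K| + 1, by positivity, fun s => ?_⟩
  have hexp : 1 ≤ Real.exp ((C + |K| + 1) * ‖s‖) := Real.one_le_exp (by positivity)
  rcases le_total ‖s‖ 1 with hs | hs
  · calc ‖f s‖
      _ ≤ C := hC s (by simpa using hs)
      _ ≤ (C + |K| + 1) * Real.exp ((C + |K| + 1) * ‖s‖) := by
        nlinarith [abs_nonneg K]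
  · calc ‖f s‖
      _ ≤ ‖s‖ * Real.exp (K * ‖s‖) := hK s hs
      _ ≤ Real.exp ‖s‖ * Real.exp (|K| * ‖s‖) := by
        gcongr
        · linarith [Real.add_one_le_exp ‖s‖]
        · exact le_abs_self K
      _ = Real.exp ((|K| + 1) * ‖s‖) := by rw [← Real.exp_add]; ring_nf
      _ ≤ Real.exp ((C + |K| + 1) * ‖s‖) := by gcongr; linarith
      _ ≤ (C + |K| + 1) * Real.exp ((C + |K| + 1) * ‖s‖) := by
        nlinarith [abs_nonneg K]

end Propagator

/-- **Proposition 4.**  The fundamental matrix `Φ¹ₛ` of the complexified Jacobi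
equation `Φ̇ = Z_tˢ (Z_tˢ)ᵀ J Φ`, `Φ⁰ₛ = I` (understood as a Carathéodory solution,
i.e. through the integral equation) is an entire function of `s` and satisfies
`‖Φ¹ₛ‖ ≤ c e^{c|s|}`. -/
theorem fundamental_matrix_entire_and_exponential_bound
    (d m : ℕ) (hd : 0 < d) (hm : 0 < m)
    (Z : ℝ → Matrix (Fin (d + d)) (Fin m) ℝ)
    (hZmeas : ∀ i j, Measurable fun t => Z t i j)
    (hZbdd : ∃ C : ℝ, ∀ t ∈ Set.Icc (0:ℝ) 1, ∀ i j, |Z t i j| ≤ C)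
    (Φ : ℂ → ℝ → Matrix (Fin (d + d)) (Fin (d + d)) ℂ)
    (hΦ0 : ∀ s : ℂ, Φ s 0 = 1)
    (hΦ : ∀ (s : ℂ), ∀ t ∈ Set.Icc (0:ℝ) 1, ∀ i j,
      Φ s t i j = (1 : Matrix (Fin (d + d)) (Fin (d + d)) ℂ) i j +
        ∫ τ in (0:ℝ)..t, ((Zs Z s τ * (Zs Z s τ)ᵀ * Jc d) * Φ s τ) i j) :
    (∀ i j, Differentiable ℂ (fun s : ℂ => Φ s 1 i j)) ∧
    ∃ c : ℝ, 0 < c ∧ ∀ s : ℂ, ‖Φ s 1‖ ≤ c * Real.exp (c * ‖s‖) := by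
  have hgram := memLp_top_gramCLM measurableSet_Icc hZmeas hZbdd
  let G := hgram.toLp
  let T : Set.Icc (0 : ℝ) 1 := ⟨1, Set.right_mem_Icc.2 zero_le_one⟩
  have hcol (s : ℂ) (j : Fin (d + d)) :
      (Φ s 1 · j) = propagator zero_le_one (jacobiCoeff G s) (Pi.single j 1) T := by
    refine eq_propagator_jacobiCoeff (x := fun t i => Φ s t i j) hgram.coeFn_toLp
      (fun t ht i => ?_) T
    rw [hΦ s t ht i j, one_apply, Pi.single_apply]
    rfl
  have hdiff (i j) : Differentiable ℂ fun s => Φ s 1 i j := by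
    refine differentiable_pi.1 (?_ : Differentiable ℂ fun s => (Φ s 1 · j)) i
    rw [funext (hcol · j)]
    exact differentiable_propagator_apply zero_le_one (differentiable_jacobiCoeff G) _ T
  have hbound (s : ℂ) (hs : 1 ≤ ‖s‖) :
      ‖Φ s 1‖ ≤ ‖s‖ * Real.exp ((1 - 0) * ‖jacobiCoeff G 1‖ * ‖s‖) :=
    (Matrix.norm_le_iff (by positivity)).2 fun i j =>
      (norm_le_pi_norm (Φ s 1 · j) i).trans <|
        hcol s j ▸ norm_propagator_jacobiCoeff_single_le zero_le_one G hs j T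
  exact ⟨hdiff, exists_norm_le_mul_exp
    (continuous_matrix fun i j => (hdiff i j).continuous) hbound⟩

end
end

section
/- Let t ↦ Z_t be a bounded measurable family of 2d×m real matrices on [0,1] with Γ₁ = ∫₀¹ X_t X_tᵀ dt invertible. Then every complex root of the equation det Q₁ˢ = 0, s ∈ ℂ, is real. -/
open MeasureTheory Filter Topology Matrix

noncomputable section

/-- The bottom `d × m` block `X_t` of the block matrix `Z_t = (Y_t; X_t)`. -/
def Xblock {d m : ℕ} (Z : ℝ → Matrix (Fin (d + d)) (Fin m) ℝ) (t : ℝ) :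
    Matrix (Fin d) (Fin m) ℝ :=
  Matrix.of fun i j => Z t (finSumFinEquiv (Sum.inr i)) j

/-- Carathéodory solution of the complexified Jacobi equation
`η̇ = Z_tˢ (Z_tˢ)ᵀ J η`, via the equivalent integral equation. -/
def IsJacobiSolutionC {d m : ℕ} (Z : ℝ → Matrix (Fin (d + d)) (Fin m) ℝ) (s : ℂ)
    (η : ℝ → Fin (d + d) → ℂ) : Prop :=
  ∀ t ∈ Set.Icc (0:ℝ) 1,
    η t = η 0 + ∫ τ in (0:ℝ)..t, (Zs Z s τ * (Zs Z s τ)ᵀ * Jc d).mulVec (η τ)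

/-- Entrywise integral of a matrix-valued function over a subset of `ℝ`. -/
def mSetIntegral {n p : Type*} (s : Set ℝ) (f : ℝ → Matrix n p ℝ) : Matrix n p ℝ :=
  Matrix.of fun i j => ∫ t in s, f t i j

/-!
Let `η = (p, q)` solve the Jacobi equation and put `u = (Zˢ)ᵀ J η = Xᵀ p - s Yᵀ q`, so that
`ṗ = s Y u` and `q̇ = X u`. Then

  `d/dt (p · q̄) = s (Y u · q̄) + (u + s Yᵀ q) · ū = |u|² + 2 s Re (Y u · q̄)`,

and multiplying by `s̄` makes the last term real: `d/dt Im (s̄ (p · q̄)) = Im s̄ · |u|²`. If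
`det Q₁ˢ = 0`, some nonzero `p(0)` gives a solution with `q(0) = q(1) = 0`, for which the integral
of the right-hand side vanishes. If `s` is not real, this forces `u = 0` almost everywhere, so `η`
is constant and `X_tᵀ p(0) = 0` for almost every `t`; hence `Γ₁ p(0) = 0`, a contradiction.
-/

theorem le_mul_exp_of_le_add_integral {u : ℝ → ℝ} {δ K a b : ℝ} (hK : 0 ≤ K)
    (hu : ContinuousOn u (Set.Icc a b))
    (hle : ∀ t ∈ Set.Icc a b, u t ≤ δ + K * ∫ τ in a..t, u τ) :
    ∀ t ∈ Set.Icc a b, u t ≤ δ * Real.exp (K * (t - a)) := by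
  intro t ht
  have hint : IntervalIntegrable u volume a b :=
    ContinuousOn.intervalIntegrable_of_Icc (ht.1.trans ht.2) hu
  have hcont : ContinuousOn (fun x => δ + K * ∫ τ in a..x, u τ) (Set.Icc a b) := by
    rw [← Set.uIcc_of_le (ht.1.trans ht.2)]
    exact continuousOn_const.add
      ((intervalIntegral.continuousOn_primitive_interval' hint Set.left_mem_uIcc).const_mul K)
  have hderiv : ∀ x ∈ Set.Ico a b,
      HasDerivWithinAt (fun x => δ + K * ∫ τ in a..x, u τ) (K * u x) (Set.Ici x) x := by
    intro x hx
    have hcont_right : ContinuousWithinAt u (Set.Ioi x) x :=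
      (hu x (Set.Ico_subset_Icc_self hx)).mono_of_mem_nhdsWithin
        (mem_of_superset (Ioc_mem_nhdsGT hx.2) (Set.Ioc_subset_Icc_self.trans
          (Set.Icc_subset_Icc_left hx.1)))
    have hmeas : StronglyMeasurableAtFilter u (𝓝[>] x) :=
      ⟨Set.Ioc x b, Ioc_mem_nhdsGT hx.2,
        (hu.mono (Set.Ioc_subset_Icc_self.trans
          (Set.Icc_subset_Icc_left hx.1))).aestronglyMeasurable measurableSet_Ioc⟩
    have hint_x : IntervalIntegrable u volume a x :=
      hint.mono_set (Set.uIcc_subset_uIcc_left (Set.mem_uIcc_of_le hx.1 hx.2.le))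
    exact ((intervalIntegral.integral_hasDerivWithinAt_right hint_x hmeas hcont_right).const_mul
      K).const_add δ
  calc u t ≤ δ + K * ∫ τ in a..t, u τ := hle t ht
    _ ≤ gronwallBound δ K 0 (t - a) :=
      le_gronwallBound_of_liminf_deriv_right_le hcont
        (fun x hx r hr => by
          simpa only [slope_def_field, div_eq_inv_mul] using
            (hderiv x hx).liminf_right_slope_le hr)
        (by simp)
        (fun x hx => by
          rw [add_zero]
          exact mul_le_mul_of_nonneg_left (hle x (Set.Ico_subset_Icc_self hx)) hK) t ht
    _ = δ * Real.exp (K * (t - a)) := gronwallBound_ε0 δ K (t - a)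

theorem ae_eq_zero_of_ae_hasDerivAt_nonneg {f f' : ℝ → ℝ} {a b : ℝ} (hab : a ≤ b)
    (hf : AbsolutelyContinuousOnInterval f a b) (hend : f a = f b)
    (hderiv : ∀ᵐ x ∂volume.restrict (Set.Icc a b), HasDerivAt f (f' x) x)
    (hnonneg : 0 ≤ᵐ[volume.restrict (Set.Icc a b)] f') :
    f' =ᵐ[volume.restrict (Set.Icc a b)] 0 := by
  rw [← restrict_Ioc_eq_restrict_Icc] at *
  have hderiv_eq : deriv f =ᵐ[volume.restrict (Set.Ioc a b)] f' :=
    hderiv.mono fun x hx => hx.deriv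
  have hintegral : ∫ x in a..b, deriv f x = 0 := by
    rw [hf.integral_deriv_eq_sub, hend, sub_self]
  exact hderiv_eq.symm.trans <|
    (intervalIntegral.integral_eq_zero_iff_of_le_of_nonneg_ae hab
      (hnonneg.trans hderiv_eq.symm.le) hf.intervalIntegrable_deriv).1 hintegral

theorem absolutelyContinuousOnInterval_comp_of_locallyLipschitz {E F : Type*}
    [PseudoMetricSpace E] [PseudoMetricSpace F] {Φ : E → F} {γ : ℝ → E} {K : NNReal} {a b : ℝ}
    (hΦ : LocallyLipschitz Φ) (hγ : LipschitzOnWith K γ (Set.uIcc a b)) :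
    AbsolutelyContinuousOnInterval (Φ ∘ γ) a b := by
  obtain ⟨L, hL⟩ := LocallyLipschitzOn.exists_lipschitzOnWith_of_compact
    (isCompact_uIcc.image_of_continuousOn hγ.continuousOn) hΦ.locallyLipschitzOn
  exact (hL.comp hγ (Set.mapsTo_image γ _)).absolutelyContinuousOnInterval

section LinearCaratheodory

variable {𝕜 E : Type*} [NontriviallyNormedField 𝕜] [NormedAddCommGroup E] [NormedSpace 𝕜 E]
  [NormedSpace ℝ E] {A : ℝ → E →L[𝕜] E} {η : ℝ → E} {a b K : ℝ}

/-- Carathéodory solutions on `[a, b]` of the linear equation `η̇ = A η`, via the integral equation.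
Integrability of `τ ↦ A τ (η τ)` is not required: the Bochner integral is `0` where it fails, and
`IsLinearSolutionOn.intervalIntegrable` rules this out for bounded measurable `A`. -/
def IsLinearSolutionOn (A : ℝ → E →L[𝕜] E) (η : ℝ → E) (a b : ℝ) : Prop :=
  ∀ t ∈ Set.Icc a b, η t = η a + ∫ τ in a..t, A τ (η τ)

namespace IsLinearSolutionOn

theorem mono_right (h : IsLinearSolutionOn A η a b) {c : ℝ} (hcb : c ≤ b) :
    IsLinearSolutionOn A η a c :=
  fun t ht => h t ⟨ht.1, ht.2.trans hcb⟩

theorem continuousOn (h : IsLinearSolutionOn A η a b)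
    (hint : IntervalIntegrable (fun τ => A τ (η τ)) volume a b) :
    ContinuousOn η (Set.Icc a b) := by
  rcases lt_or_ge b a with hba | hab
  · simp only [Set.Icc_eq_empty_of_lt hba, continuousOn_empty]
  have hprim := intervalIntegral.continuousOn_primitive_interval' hint Set.left_mem_uIcc
  rw [Set.uIcc_of_le hab] at hprim
  exact (continuousOn_const.add hprim).congr h

theorem norm_le (h : IsLinearSolutionOn A η a b) (hA : ∀ t ∈ Set.Icc a b, ‖A t‖ ≤ K)
    (hint : IntervalIntegrable (fun τ => A τ (η τ)) volume a b) :
    ∀ t ∈ Set.Icc a b, ‖η t‖ ≤ ‖η a‖ * Real.exp (K * (t - a)) := by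
  intro t ht
  have hK : 0 ≤ K := (norm_nonneg _).trans (hA t ht)
  have hcont : ContinuousOn (fun x => ‖η x‖) (Set.Icc a b) := (h.continuousOn hint).norm
  refine le_mul_exp_of_le_add_integral hK hcont (fun x hx => ?_) t ht
  have hint_norm : IntervalIntegrable (fun τ => ‖η τ‖) volume a x :=
    (hcont.mono (Set.Icc_subset_Icc_right hx.2)).intervalIntegrable_of_Icc hx.1
  calc ‖η x‖ = ‖η a + ∫ τ in a..x, A τ (η τ)‖ := by rw [← h x hx]
    _ ≤ ‖η a‖ + ‖∫ τ in a..x, A τ (η τ)‖ := norm_add_le _ _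
    _ ≤ ‖η a‖ + ∫ τ in a..x, K * ‖η τ‖ := by
      gcongr
      refine intervalIntegral.norm_integral_le_of_norm_le hx.1
        (Eventually.of_forall fun τ hτ => ?_) (hint_norm.const_mul K)
      exact (A τ).le_of_opNorm_le (hA τ ⟨hτ.1.le, hτ.2.trans hx.2⟩) _
    _ = ‖η a‖ + K * ∫ τ in a..x, ‖η τ‖ := by rw [intervalIntegral.integral_const_mul]

theorem intervalIntegrable_of_forall_lt (h : IsLinearSolutionOn A η a b) (hab : a ≤ b)
    (hA : ∀ t ∈ Set.Icc a b, ‖A t‖ ≤ K)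
    (hmeas : AEStronglyMeasurable A (volume.restrict (Set.Icc a b)))
    (hint : ∀ t ∈ Set.Ico a b, IntervalIntegrable (fun τ => A τ (η τ)) volume a t) :
    IntervalIntegrable (fun τ => A τ (η τ)) volume a b := by
  have hK : 0 ≤ K := (norm_nonneg _).trans (hA a ⟨le_rfl, hab⟩)
  have hcont : ContinuousOn η (Set.Ico a b) := by
    intro x hx
    obtain ⟨t, hxt, htb⟩ := exists_between hx.2
    have hcont_t := (h.mono_right htb.le).continuousOn (hint t ⟨hx.1.trans hxt.le, htb⟩)
    refine (hcont_t x ⟨hx.1, hxt.le⟩).mono_of_mem_nhdsWithin ?_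
    filter_upwards [mem_nhdsWithin_of_mem_nhds (Iio_mem_nhds hxt), self_mem_nhdsWithin]
      with y hyt hy
    exact ⟨hy.1, le_of_lt hyt⟩
  have hbound : ∀ x ∈ Set.Ico a b, ‖A x (η x)‖ ≤ K * (‖η a‖ * Real.exp (K * (b - a))) := by
    intro x hx
    have hx' : x ∈ Set.Icc a b := Set.Ico_subset_Icc_self hx
    have hη : ‖η x‖ ≤ ‖η a‖ * Real.exp (K * (x - a)) :=
      (h.mono_right hx.2.le).norm_le (fun t ht => hA t ⟨ht.1, ht.2.trans hx.2.le⟩) (hint x hx)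
        x ⟨hx.1, le_rfl⟩
    refine (A x).le_of_opNorm_le_of_le (hA x hx') (hη.trans ?_)
    gcongr
    exact hx.2.le
  rw [intervalIntegrable_iff_integrableOn_Ico_of_le hab]
  exact IntegrableOn.of_bound measure_Ico_lt_top
    ((ContinuousLinearMap.id 𝕜 (E →L[𝕜] E)).aestronglyMeasurable_comp₂
      (hmeas.mono_set Set.Ico_subset_Icc_self) (hcont.aestronglyMeasurable measurableSet_Ico))
    _ ((ae_restrict_iff' measurableSet_Ico).2 (Eventually.of_forall hbound))

theorem intervalIntegrable (h : IsLinearSolutionOn A η a b) (hab : a ≤ b)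
    (hA : ∀ t ∈ Set.Icc a b, ‖A t‖ ≤ K)
    (hmeas : AEStronglyMeasurable A (volume.restrict (Set.Icc a b))) :
    IntervalIntegrable (fun τ => A τ (η τ)) volume a b := by
  set S : Set ℝ := {t ∈ Set.Icc a b | IntervalIntegrable (fun τ => A τ (η τ)) volume a t}
  set T : ℝ := sSup S
  have haS : a ∈ S := ⟨⟨le_rfl, hab⟩, IntervalIntegrable.refl⟩
  have hbdd : BddAbove S := ⟨b, fun t ht => ht.1.2⟩
  have haT : a ≤ T := le_csSup hbdd haS
  have hTb : T ≤ b := csSup_le ⟨a, haS⟩ fun t ht => ht.1.2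
  have hint_left : IntervalIntegrable (fun τ => A τ (η τ)) volume a T := by
    refine (h.mono_right hTb).intervalIntegrable_of_forall_lt haT
      (fun t ht => hA t ⟨ht.1, ht.2.trans hTb⟩)
      (hmeas.mono_set (Set.Icc_subset_Icc_right hTb)) fun t ht => ?_
    obtain ⟨c, hcS, htc⟩ := exists_lt_of_lt_csSup ⟨a, haS⟩ ht.2
    exact hcS.2.mono_set (Set.uIcc_subset_uIcc_left (Set.mem_uIcc_of_le ht.1 htc.le))
  -- Beyond `T` the integral takes its junk value `0`, so `η` is constant there.
  have hconst : ∀ t ∈ Set.Ioc T b, η t = η a := by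
    intro t ht
    have ht' : t ∈ Set.Icc a b := ⟨haT.trans ht.1.le, ht.2⟩
    rw [h t ht', intervalIntegral.integral_undef
      fun hint => (le_csSup hbdd ⟨ht', hint⟩).not_gt ht.1, add_zero]
  have hint_right : IntervalIntegrable (fun τ => A τ (η τ)) volume T b := by
    rw [intervalIntegrable_iff_integrableOn_Ioc_of_le hTb]
    have hsub : Set.Ioc T b ⊆ Set.Icc a b := fun t ht => ⟨haT.trans ht.1.le, ht.2⟩
    refine IntegrableOn.congr_fun (f := fun τ => A τ (η a)) ?_
      (fun t ht => by rw [hconst t ht]) measurableSet_Ioc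
    exact IntegrableOn.of_bound measure_Ioc_lt_top
      ((hmeas.mono_set hsub).apply_continuousLinearMap (η a)) (K * ‖η a‖)
      ((ae_restrict_iff' measurableSet_Ioc).2 (Eventually.of_forall fun t ht =>
        (A t).le_of_opNorm_le (hA t (hsub ht)) _))
  exact hint_left.trans hint_right

theorem exists_lipschitzOnWith (h : IsLinearSolutionOn A η a b) (hab : a ≤ b)
    (hA : ∀ t ∈ Set.Icc a b, ‖A t‖ ≤ K)
    (hmeas : AEStronglyMeasurable A (volume.restrict (Set.Icc a b))) :
    ∃ C, LipschitzOnWith C η (Set.Icc a b) := by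
  have hint := h.intervalIntegrable hab hA hmeas
  have hint_sub : ∀ t ∈ Set.Icc a b, IntervalIntegrable (fun τ => A τ (η τ)) volume a t :=
    fun t ht => hint.mono_set (Set.uIcc_subset_uIcc_left (Set.mem_uIcc_of_le ht.1 ht.2))
  obtain ⟨M, hM⟩ := isCompact_Icc.exists_bound_of_continuousOn (h.continuousOn hint)
  refine ⟨(K * M).toNNReal, LipschitzOnWith.of_dist_le_mul fun x hx y hy => ?_⟩
  rw [h x hx, h y hy, dist_add_left, dist_eq_norm, Real.dist_eq,
    intervalIntegral.integral_interval_sub_left (hint_sub x hx) (hint_sub y hy)]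
  refine intervalIntegral.norm_integral_le_of_norm_le_const fun t ht => ?_
  have ht' : t ∈ Set.Icc a b := Set.uIcc_subset_Icc hy hx (Set.uIoc_subset_uIcc ht)
  exact ((A t).le_of_opNorm_le_of_le (hA t ht') (hM t ht')).trans (Real.le_coe_toNNReal _)

theorem ae_hasDerivAt [CompleteSpace E] (h : IsLinearSolutionOn A η a b)
    (hint : IntervalIntegrable (fun τ => A τ (η τ)) volume a b) :
    ∀ᵐ t ∂volume.restrict (Set.Icc a b), HasDerivAt η (A t (η t)) t := by
  rw [← restrict_Ioo_eq_restrict_Icc, ae_restrict_iff' measurableSet_Ioo]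
  filter_upwards [hint.ae_hasDerivAt_integral] with t hderiv ht
  have ht' : t ∈ Set.uIcc a b := Set.mem_uIcc_of_le ht.1.le ht.2.le
  refine ((hderiv ht' a Set.left_mem_uIcc).const_add (η a)).congr_of_eventuallyEq ?_
  filter_upwards [Ioo_mem_nhds ht.1 ht.2] with x hx using h x (Set.Ioo_subset_Icc_self hx)

theorem eq_left_of_ae_eq_zero (h : IsLinearSolutionOn A η a b)
    (hzero : ∀ᵐ t ∂volume.restrict (Set.Icc a b), A t (η t) = 0) :
    ∀ t ∈ Set.Icc a b, η t = η a := by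
  intro t ht
  have hae : ∀ᵐ τ, τ ∈ Set.uIoc a t → A τ (η τ) = 0 := by
    filter_upwards [(ae_restrict_iff' measurableSet_Icc).1 hzero] with τ hτ hmem
    rw [Set.uIoc_of_le ht.1] at hmem
    exact hτ ⟨hmem.1.le, hmem.2.trans ht.2⟩
  rw [h t ht, intervalIntegral.integral_zero_ae hae, add_zero]

end IsLinearSolutionOn

end LinearCaratheodory

theorem map_ofReal_mulVec_eq_zero_iff {n p : Type*} [Fintype p] (M : Matrix n p ℝ) (v : p → ℂ) :
    M.map ((↑) : ℝ → ℂ) *ᵥ v = 0 ↔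
      M *ᵥ (fun i => (v i).re) = 0 ∧ M *ᵥ (fun i => (v i).im) = 0 := by
  simp only [funext_iff, mulVec, dotProduct, map_apply, Pi.zero_apply, Complex.ext_iff,
    Complex.re_sum, Complex.im_sum, Complex.re_ofReal_mul, Complex.im_ofReal_mul,
    Complex.zero_re, Complex.zero_im, forall_and]

theorem star_map_ofReal_mulVec {n p : Type*} [Fintype p] (M : Matrix n p ℝ) (v : p → ℂ) :
    star (M.map ((↑) : ℝ → ℂ) *ᵥ v) = M.map ((↑) : ℝ → ℂ) *ᵥ star v := by
  ext i
  simp [mulVec, dotProduct]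

section Gramian

variable {n p : Type*} [Fintype p] {S : Set ℝ} {X : ℝ → Matrix n p ℝ}

theorem mSetIntegral_mulVec {M : ℝ → Matrix n p ℝ}
    (hM : ∀ i j, IntegrableOn (fun t => M t i j) S) (v : p → ℝ) :
    mSetIntegral S M *ᵥ v = fun i => ∫ t in S, (M t *ᵥ v) i := by
  ext i
  simp only [mSetIntegral, mulVec, dotProduct, of_apply, ← integral_mul_const]
  exact (integral_finsetSum _ fun j _ => (hM i j).mul_const (v j)).symm

theorem integrableOn_mul_transpose_apply
    (hX : ∀ i k, MemLp (fun t => X t i k) 2 (volume.restrict S)) (i j : n) :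
    IntegrableOn (fun t => (X t * (X t)ᵀ) i j) S := by
  simp only [mul_apply, transpose_apply]
  exact integrable_finsetSum _ fun k _ => (hX i k).integrable_mul (hX j k)

theorem mSetIntegral_mul_transpose_mulVec_eq_zero [Fintype n]
    (hX : ∀ i k, MemLp (fun t => X t i k) 2 (volume.restrict S)) {v : n → ℝ}
    (hv : ∀ᵐ t ∂volume.restrict S, (X t)ᵀ *ᵥ v = 0) :
    mSetIntegral S (fun t => X t * (X t)ᵀ) *ᵥ v = 0 := by
  rw [mSetIntegral_mulVec (integrableOn_mul_transpose_apply hX)]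
  ext i
  refine integral_eq_zero_of_ae ?_
  filter_upwards [hv] with t ht
  rw [← mulVec_mulVec, ht, mulVec_zero, Pi.zero_apply, Pi.zero_apply]

theorem eq_zero_of_ae_transpose_map_ofReal_mulVec_eq_zero [Fintype n] [DecidableEq n]
    (hX : ∀ i k, MemLp (fun t => X t i k) 2 (volume.restrict S))
    (hdet : IsUnit (mSetIntegral S (fun t => X t * (X t)ᵀ)).det) {v : n → ℂ}
    (hv : ∀ᵐ t ∂volume.restrict S, (X t)ᵀ.map ((↑) : ℝ → ℂ) *ᵥ v = 0) : v = 0 := by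
  simp only [map_ofReal_mulVec_eq_zero_iff, eventually_and] at hv
  have hre := eq_zero_of_mulVec_eq_zero hdet.ne_zero
    (mSetIntegral_mul_transpose_mulVec_eq_zero hX hv.1)
  have him := eq_zero_of_mulVec_eq_zero hdet.ne_zero
    (mSetIntegral_mul_transpose_mulVec_eq_zero hX hv.2)
  exact funext fun i => Complex.ext (congrFun hre i) (congrFun him i)

end Gramian

section Jacobi

variable {d m : ℕ}

/-- The `p`-component of a phase-space vector `(p, q)`. -/
def momentum (v : Fin (d + d) → ℂ) : Fin d → ℂ := fun i => v (finSumFinEquiv (Sum.inl i))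

/-- The `q`-component of a phase-space vector `(p, q)`. -/
def position (v : Fin (d + d) → ℂ) : Fin d → ℂ := fun i => v (finSumFinEquiv (Sum.inr i))

/-- The top `d × m` block `Y_t` of the block matrix `Z_t = (Y_t; X_t)`. -/
def Yblock (Z : ℝ → Matrix (Fin (d + d)) (Fin m) ℝ) (t : ℝ) : Matrix (Fin d) (Fin m) ℝ :=
  Matrix.of fun i j => Z t (finSumFinEquiv (Sum.inl i)) j

/-- The vector `(Z_tˢ)ᵀ J (p, q) = X_tᵀ p - s Y_tᵀ q`, so that the Jacobi equation reads
`η̇ = Z_tˢ u` with `u = jacobiControl Z s t η`. -/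
def jacobiControl (Z : ℝ → Matrix (Fin (d + d)) (Fin m) ℝ) (s : ℂ) (t : ℝ)
    (v : Fin (d + d) → ℂ) : Fin m → ℂ :=
  ((Xblock Z t)ᵀ.map ((↑) : ℝ → ℂ)) *ᵥ momentum v -
    s • (((Yblock Z t)ᵀ.map ((↑) : ℝ → ℂ)) *ᵥ position v)

variable (Z : ℝ → Matrix (Fin (d + d)) (Fin m) ℝ) (s : ℂ) (t : ℝ)

theorem momentum_Jc_mulVec (v : Fin (d + d) → ℂ) : momentum (Jc d *ᵥ v) = -position v := by
  ext i
  simp only [momentum, position, Pi.neg_apply, mulVec, dotProduct]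
  rw [← finSumFinEquiv.sum_comp, Fintype.sum_sum_type]
  simp only [Jc, reindex_apply, submatrix_apply, Equiv.symm_apply_apply]
  simp [one_apply]

theorem position_Jc_mulVec (v : Fin (d + d) → ℂ) : position (Jc d *ᵥ v) = momentum v := by
  ext i
  simp only [momentum, position, mulVec, dotProduct]
  rw [← finSumFinEquiv.sum_comp, Fintype.sum_sum_type]
  simp only [Jc, reindex_apply, submatrix_apply, Equiv.symm_apply_apply]
  simp [one_apply]

theorem Zs_transpose_mulVec (v : Fin (d + d) → ℂ) :
    (Zs Z s t)ᵀ *ᵥ v = s • ((Yblock Z t)ᵀ.map ((↑) : ℝ → ℂ) *ᵥ momentum v) +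
      (Xblock Z t)ᵀ.map ((↑) : ℝ → ℂ) *ᵥ position v := by
  ext j
  rw [mulVec, dotProduct, ← finSumFinEquiv.sum_comp, Fintype.sum_sum_type]
  simp [Zs, Yblock, Xblock, momentum, position, mulVec, dotProduct, Finset.mul_sum, mul_assoc]

theorem momentum_Zs_mulVec (w : Fin m → ℂ) :
    momentum (Zs Z s t *ᵥ w) = s • ((Yblock Z t).map ((↑) : ℝ → ℂ) *ᵥ w) := by
  ext i
  simp [momentum, Zs, Yblock, mulVec, dotProduct, Finset.mul_sum, mul_assoc]

theorem position_Zs_mulVec (w : Fin m → ℂ) :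
    position (Zs Z s t *ᵥ w) = (Xblock Z t).map ((↑) : ℝ → ℂ) *ᵥ w := by
  ext i
  simp [position, Zs, Xblock, mulVec, dotProduct]

theorem Zs_transpose_mul_Jc_mulVec (v : Fin (d + d) → ℂ) :
    (Zs Z s t)ᵀ *ᵥ (Jc d *ᵥ v) = jacobiControl Z s t v := by
  rw [Zs_transpose_mulVec, momentum_Jc_mulVec, position_Jc_mulVec, jacobiControl, mulVec_neg,
    smul_neg, neg_add_eq_sub]

/-- The right-hand side `v ↦ Z_tˢ (Z_tˢ)ᵀ J v` of the Jacobi equation, as a continuous operator. -/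
def jacobiOperator : (Fin (d + d) → ℂ) →L[ℂ] (Fin (d + d) → ℂ) :=
  LinearMap.toContinuousLinearMap (toLin' (Zs Z s t * (Zs Z s t)ᵀ * Jc d))

theorem jacobiOperator_apply (v : Fin (d + d) → ℂ) :
    jacobiOperator Z s t v = Zs Z s t *ᵥ jacobiControl Z s t v := by
  rw [← Zs_transpose_mul_Jc_mulVec, mulVec_mulVec, mulVec_mulVec]
  rfl

theorem momentum_dotProduct_star_position_jacobiOperator (v : Fin (d + d) → ℂ) :
    momentum (jacobiOperator Z s t v) ⬝ᵥ star (position v) +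
      momentum v ⬝ᵥ star (position (jacobiOperator Z s t v)) =
    jacobiControl Z s t v ⬝ᵥ star (jacobiControl Z s t v) +
      s * (2 * ((Yblock Z t).map ((↑) : ℝ → ℂ) *ᵥ jacobiControl Z s t v ⬝ᵥ
        star (position v)).re : ℝ) := by
  set u := jacobiControl Z s t v
  set b := (Yblock Z t).map ((↑) : ℝ → ℂ) *ᵥ u ⬝ᵥ star (position v) with hb
  have hXp : (Xblock Z t)ᵀ.map ((↑) : ℝ → ℂ) *ᵥ momentum v =
      u + s • ((Yblock Z t)ᵀ.map ((↑) : ℝ → ℂ) *ᵥ position v) := (sub_add_cancel _ _).symm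
  have hYq : (Yblock Z t)ᵀ.map ((↑) : ℝ → ℂ) *ᵥ position v ⬝ᵥ star u = star b := by
    rw [hb, dotProduct_comm, transpose_map, dotProduct_transpose_mulVec,
      ← star_map_ofReal_mulVec, ← star_dotProduct_star, star_star]
  have hposition : momentum v ⬝ᵥ star (position (Zs Z s t *ᵥ u)) = u ⬝ᵥ star u + s * star b :=
    calc momentum v ⬝ᵥ star (position (Zs Z s t *ᵥ u))
      _ = (Xblock Z t)ᵀ.map ((↑) : ℝ → ℂ) *ᵥ momentum v ⬝ᵥ star u := by
        rw [position_Zs_mulVec, star_map_ofReal_mulVec, transpose_map, dotProduct_comm _ (star u),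
          dotProduct_transpose_mulVec]
      _ = u ⬝ᵥ star u + s * star b := by
        rw [hXp, add_dotProduct, smul_dotProduct, hYq, smul_eq_mul]
  rw [jacobiOperator_apply, hposition, momentum_Zs_mulVec, smul_dotProduct, ← hb, smul_eq_mul,
    ← Complex.add_conj, Complex.star_def]
  ring

-- `jacobiOperator Z s t` depends on `Z` and `t` only through the matrix `Z t`.
theorem continuous_jacobiOperator_const :
    Continuous fun M : Fin (d + d) → Fin m → ℝ => jacobiOperator (fun _ => of M) s 0 := by
  have hZs : Continuous fun M : Fin (d + d) → Fin m → ℝ => Zs (fun _ : ℝ => of M) s 0 :=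
    continuous_matrix fun i j => by
      simp only [Zs, of_apply]
      fun_prop
  have hprod : Continuous fun M : Fin (d + d) → Fin m → ℝ =>
      Zs (fun _ : ℝ => of M) s 0 * (Zs (fun _ : ℝ => of M) s 0)ᵀ * Jc d :=
    (hZs.matrix_mul hZs.matrix_transpose).matrix_mul continuous_const
  have hlin : Continuous fun M : Matrix (Fin (d + d)) (Fin (d + d)) ℂ =>
      LinearMap.toContinuousLinearMap (toLin' M) :=
    LinearMap.continuous_of_finiteDimensional
      (toLin'.trans LinearMap.toContinuousLinearMap :
        Matrix (Fin (d + d)) (Fin (d + d)) ℂ ≃ₗ[ℂ] _).toLinearMap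
  exact hlin.comp hprod

variable {Z}

theorem stronglyMeasurable_jacobiOperator (hZ : ∀ i j, Measurable fun t => Z t i j) :
    StronglyMeasurable (jacobiOperator Z s) :=
  (continuous_jacobiOperator_const s).comp_stronglyMeasurable
    (measurable_pi_iff.2 fun i => measurable_pi_iff.2 (hZ i)).stronglyMeasurable

theorem exists_norm_jacobiOperator_le {S : Set ℝ} (hZ : ∃ C : ℝ, ∀ t ∈ S, ∀ i j, |Z t i j| ≤ C) :
    ∃ K, ∀ t ∈ S, ‖jacobiOperator Z s t‖ ≤ K := by
  obtain ⟨C, hC⟩ := hZ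
  obtain ⟨K, hK⟩ := (isCompact_univ_pi fun _ => isCompact_univ_pi fun _ =>
    isCompact_Icc (a := -C) (b := C)).exists_bound_of_continuousOn
      (continuous_jacobiOperator_const (d := d) (m := m) s).continuousOn
  exact ⟨K, fun t ht => hK (Z t) fun i _ j _ => abs_le.1 (hC t ht i j)⟩

/-- The functional `v = (p, q) ↦ Im (s̄ (p · q̄)) / Im s̄`, which along solutions of the Jacobi
equation grows at the rate `|u|²`, where `u = jacobiControl Z s t v`. For real `s` it takes the junk
value `0`. -/
def jacobiEnergy (s : ℂ) (v : Fin (d + d) → ℂ) : ℝ :=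
  (star s * (momentum v ⬝ᵥ star (position v))).im / (star s).im

theorem contDiff_jacobiEnergy {n : WithTop ℕ∞} :
    ContDiff ℝ n (jacobiEnergy s : (Fin (d + d) → ℂ) → ℝ) := by
  refine (Complex.imCLM.contDiff.comp (contDiff_const.mul (ContDiff.sum fun i _ => ?_))).div_const _
  exact (contDiff_apply ℝ ℂ _).mul (Complex.conjCLE.contDiff.comp (contDiff_apply ℝ ℂ _))

variable {s t}

theorem hasDerivAt_jacobiEnergy_comp {η : ℝ → Fin (d + d) → ℂ} {η' : Fin (d + d) → ℂ}
    (h : HasDerivAt η η' t) :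
    HasDerivAt (fun τ => jacobiEnergy s (η τ))
      ((star s * (momentum η' ⬝ᵥ star (position (η t)) +
        momentum (η t) ⬝ᵥ star (position η'))).im / (star s).im) t := by
  rw [hasDerivAt_pi] at h
  have hpq : HasDerivAt (fun τ => momentum (η τ) ⬝ᵥ star (position (η τ)))
      (momentum η' ⬝ᵥ star (position (η t)) + momentum (η t) ⬝ᵥ star (position η')) t := by
    simp only [dotProduct, ← Finset.sum_add_distrib]
    exact HasDerivAt.fun_sum fun i _ => (h _).mul (h _).star
  exact (Complex.imCLM.hasFDerivAt.comp_hasDerivAt t (hpq.const_mul (star s))).div_const _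

theorem hasDerivAt_jacobiEnergy_comp_of_jacobiOperator (hs : s.im ≠ 0)
    {η : ℝ → Fin (d + d) → ℂ} (h : HasDerivAt η (jacobiOperator Z s t (η t)) t) :
    HasDerivAt (fun τ => jacobiEnergy s (η τ)) (∑ j, ‖jacobiControl Z s t (η t) j‖ ^ 2) t := by
  have hnorm : jacobiControl Z s t (η t) ⬝ᵥ star (jacobiControl Z s t (η t)) =
      ((∑ j, ‖jacobiControl Z s t (η t) j‖ ^ 2 : ℝ) : ℂ) := by
    simp [dotProduct, Complex.mul_conj']
  have hstar_mul : star s * s = ((‖s‖ ^ 2 : ℝ) : ℂ) := by simp [Complex.conj_mul']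
  have hstar_im : (star s).im ≠ 0 := by simpa using hs
  refine (hasDerivAt_jacobiEnergy_comp h).congr_deriv ?_
  rw [momentum_dotProduct_star_position_jacobiOperator, hnorm, mul_add, ← mul_assoc, hstar_mul,
    ← Complex.ofReal_mul, Complex.add_im, Complex.ofReal_im, add_zero, Complex.im_mul_ofReal,
    mul_div_cancel_left₀ _ hstar_im]

theorem jacobiEnergy_eq_zero_of_position_eq_zero {v : Fin (d + d) → ℂ} (hv : position v = 0) :
    jacobiEnergy s v = 0 := by
  rw [jacobiEnergy, hv, star_zero, dotProduct_zero, mul_zero, Complex.zero_im, zero_div]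

namespace IsJacobiSolutionC

variable {η : ℝ → Fin (d + d) → ℂ}

theorem isLinearSolutionOn (hη : IsJacobiSolutionC Z s η) :
    IsLinearSolutionOn (jacobiOperator Z s) η 0 1 :=
  hη

theorem ae_jacobiControl_eq_zero (hη : IsJacobiSolutionC Z s η)
    (hmeas : ∀ i j, Measurable fun t => Z t i j)
    (hbdd : ∃ C : ℝ, ∀ t ∈ Set.Icc (0 : ℝ) 1, ∀ i j, |Z t i j| ≤ C) (hs : s.im ≠ 0)
    (hposition_zero : position (η 0) = 0) (hposition_one : position (η 1) = 0) :
    ∀ᵐ t ∂volume.restrict (Set.Icc (0 : ℝ) 1), jacobiControl Z s t (η t) = 0 := by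
  obtain ⟨K, hK⟩ := exists_norm_jacobiOperator_le s hbdd
  have hlin := hη.isLinearSolutionOn
  have hA := (stronglyMeasurable_jacobiOperator s hmeas).aestronglyMeasurable
    (μ := volume.restrict (Set.Icc (0 : ℝ) 1))
  obtain ⟨L, hL⟩ := hlin.exists_lipschitzOnWith zero_le_one hK hA
  have henergy_ac : AbsolutelyContinuousOnInterval (jacobiEnergy s ∘ η) 0 1 :=
    absolutelyContinuousOnInterval_comp_of_locallyLipschitz
      (contDiff_jacobiEnergy s).locallyLipschitz (by rwa [Set.uIcc_of_le zero_le_one])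
  have henergy_end : (jacobiEnergy s ∘ η) 0 = (jacobiEnergy s ∘ η) 1 := by
    simp only [Function.comp_apply, jacobiEnergy_eq_zero_of_position_eq_zero, hposition_zero,
      hposition_one]
  have hcontrol := ae_eq_zero_of_ae_hasDerivAt_nonneg zero_le_one henergy_ac henergy_end
    ((hlin.ae_hasDerivAt (hlin.intervalIntegrable zero_le_one hK hA)).mono fun t ht =>
      hasDerivAt_jacobiEnergy_comp_of_jacobiOperator hs ht)
    (Eventually.of_forall fun t => Finset.sum_nonneg fun j _ => sq_nonneg _)
  filter_upwards [hcontrol] with t ht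
  ext j
  exact norm_eq_zero.1 <| sq_eq_zero_iff.1 <|
    (Finset.sum_eq_zero_iff_of_nonneg fun j _ => sq_nonneg _).1 ht j (Finset.mem_univ j)

theorem ae_Xblock_transpose_mulVec_momentum_eq_zero (hη : IsJacobiSolutionC Z s η)
    (hcontrol : ∀ᵐ t ∂volume.restrict (Set.Icc (0 : ℝ) 1), jacobiControl Z s t (η t) = 0)
    (hposition_zero : position (η 0) = 0) :
    ∀ᵐ t ∂volume.restrict (Set.Icc (0 : ℝ) 1),
      (Xblock Z t)ᵀ.map ((↑) : ℝ → ℂ) *ᵥ momentum (η 0) = 0 := by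
  have hconst : ∀ t ∈ Set.Icc (0 : ℝ) 1, η t = η 0 :=
    hη.isLinearSolutionOn.eq_left_of_ae_eq_zero <| hcontrol.mono fun t ht => by
      rw [jacobiOperator_apply, ht, mulVec_zero]
  filter_upwards [hcontrol, ae_restrict_mem measurableSet_Icc] with t ht hmem
  rwa [hconst t hmem, jacobiControl, hposition_zero, mulVec_zero, smul_zero, sub_zero] at ht

end IsJacobiSolutionC

theorem memLp_Xblock_apply {S : Set ℝ} {q : ENNReal} (hS : MeasurableSet S) (hS_fin : volume S ≠ ⊤)
    (hmeas : ∀ i j, Measurable fun t => Z t i j)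
    (hbdd : ∃ C : ℝ, ∀ t ∈ S, ∀ i j, |Z t i j| ≤ C) (i : Fin d) (k : Fin m) :
    MemLp (fun t => Xblock Z t i k) q (volume.restrict S) := by
  obtain ⟨C, hC⟩ := hbdd
  have : IsFiniteMeasure (volume.restrict S) := isFiniteMeasure_restrict.2 hS_fin
  exact MemLp.of_bound (hmeas _ k).aestronglyMeasurable C <|
    (ae_restrict_mem hS).mono fun t ht => hC t ht _ k

end Jacobi

/-- **Corollary 2.**  All roots of the equation `det Q₁ˢ = 0`, `s ∈ ℂ`, are real. -/
theorem roots_of_detQ_are_real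
    (d m : ℕ) (hd : 0 < d) (hm : 0 < m)
    (Z : ℝ → Matrix (Fin (d + d)) (Fin m) ℝ)
    (hZmeas : ∀ i j, Measurable fun t => Z t i j)
    (hZbdd : ∃ C : ℝ, ∀ t ∈ Set.Icc (0:ℝ) 1, ∀ i j, |Z t i j| ≤ C)
    (hΓinv : IsUnit (mSetIntegral (Set.Icc (0:ℝ) 1)
      (fun t => Xblock Z t * (Xblock Z t)ᵀ)).det)
    (Q : ℂ → Matrix (Fin d) (Fin d) ℂ)
    (hQ : ∀ (s : ℂ) (p₀ : Fin d → ℂ), ∃ η : ℝ → Fin (d + d) → ℂ,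
      IsJacobiSolutionC Z s η ∧
      (∀ i, η 0 (finSumFinEquiv (Sum.inl i)) = p₀ i) ∧
      (∀ i, η 0 (finSumFinEquiv (Sum.inr i)) = 0) ∧
      (∀ i, η 1 (finSumFinEquiv (Sum.inr i)) = (Q s).mulVec p₀ i)) :
    ∀ s : ℂ, (Q s).det = 0 → s.im = 0 := by
  intro s hdet
  by_contra hs
  obtain ⟨p₀, hp₀, hQp₀⟩ := exists_mulVec_eq_zero_iff.2 hdet
  obtain ⟨η, hη, hmomentum, hposition_zero, hposition_one⟩ := hQ s p₀
  have hq₀ : position (η 0) = 0 := funext hposition_zero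
  have hq₁ : position (η 1) = 0 := (funext hposition_one).trans hQp₀
  have hcontrol := hη.ae_jacobiControl_eq_zero hZmeas hZbdd hs hq₀ hq₁
  have hXp₀ := hη.ae_Xblock_transpose_mulVec_momentum_eq_zero hcontrol hq₀
  have hX := memLp_Xblock_apply (q := 2) measurableSet_Icc measure_Icc_lt_top.ne hZmeas hZbdd
  exact hp₀ <| (funext hmomentum).symm.trans <|
    eq_zero_of_ae_transpose_map_ofReal_mulVec_eq_zero hX hΓinv hXp₀

end
end

section
/- Let A and R be real symmetric m×m matrices. Then ∑_{n=1}^∞ tr( R·(A² + (πn)² I)⁻¹ ) = tr( M · N⁻¹ ), where M = ∭_{0 ≤ τ₁ ≤ τ₂ ≤ t ≤ 1} exp((τ₂ − 2t)A) · R · exp((τ₂ − 2τ₁)A) dτ₂ dτ₁ dt and N = ∫₀¹ exp(−2tA) dt; in particular the series on the left converges. -/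
open MeasureTheory Filter Topology Matrix

noncomputable section

/-- Matrix exponential, defined by the convergent power series. -/
def mExp {m : ℕ} (M : Matrix (Fin m) (Fin m) ℝ) : Matrix (Fin m) (Fin m) ℝ :=
  ∑' k : ℕ, ((k.factorial : ℝ)⁻¹) • M ^ k

/-- Matrix sine, defined by the convergent power series. -/
def mSin {m : ℕ} (M : Matrix (Fin m) (Fin m) ℝ) : Matrix (Fin m) (Fin m) ℝ :=
  ∑' k : ℕ, (((-1 : ℝ) ^ k / ((2 * k + 1).factorial : ℝ))) • M ^ (2 * k + 1)

/-- Matrix hyperbolic cosine. -/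
def mCosh {m : ℕ} (M : Matrix (Fin m) (Fin m) ℝ) : Matrix (Fin m) (Fin m) ℝ :=
  (2⁻¹ : ℝ) • (mExp M + mExp (-M))

/-- Matrix hyperbolic sine. -/
def mSinh {m : ℕ} (M : Matrix (Fin m) (Fin m) ℝ) : Matrix (Fin m) (Fin m) ℝ :=
  (2⁻¹ : ℝ) • (mExp M - mExp (-M))

/-!
Every matrix in the identity that is built from `A` alone is `cfc f A` for a scalar function `f`.
Cyclicity of the trace moves `exp ((τ₂ - 2 * t) • A)` past `R`, next to the other factors of this
form, so both sides are traces of `R * cfc f A`. Equality of the two functions `f` is the expansion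
`∑ 1 / (x ^ 2 + (π n) ^ 2) = (x coth x - 1) / (2 x ^ 2)`, the Mittag-Leffler series of the cotangent
on the imaginary axis.
-/

/-- The iterated integral of `f t τ₂ τ₁` over the simplex `0 ≤ τ₁ ≤ τ₂ ≤ t ≤ 1`. -/
def simplexIntegral {E : Type*} [NormedAddCommGroup E] [NormedSpace ℝ E]
    (f : ℝ → ℝ → ℝ → E) : E :=
  ∫ t in Set.Icc (0 : ℝ) 1, ∫ τ₂ in Set.Icc (0 : ℝ) t, ∫ τ₁ in Set.Icc (0 : ℝ) τ₂, f t τ₂ τ₁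

section SimplexIntegral

variable {E F : Type*} [NormedAddCommGroup E] [NormedSpace ℝ E] [NormedAddCommGroup F]
  [NormedSpace ℝ F]

theorem setIntegral_Icc_eq_intervalIntegral {a b : ℝ} (hab : a ≤ b) (f : ℝ → E) :
    ∫ x in Set.Icc a b, f x = ∫ x in a..b, f x := by
  rw [intervalIntegral.integral_of_le hab, integral_Icc_eq_integral_Ioc]

theorem simplexIntegral_eq_intervalIntegral (f : ℝ → ℝ → ℝ → E) :
    simplexIntegral f = ∫ t in (0 : ℝ)..1, ∫ s in (0 : ℝ)..t, ∫ r in (0 : ℝ)..s, f t s r := by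
  rw [simplexIntegral, ← setIntegral_Icc_eq_intervalIntegral zero_le_one]
  refine setIntegral_congr_fun measurableSet_Icc fun t ht => ?_
  rw [← setIntegral_Icc_eq_intervalIntegral ht.1]
  exact setIntegral_congr_fun measurableSet_Icc fun s hs =>
    setIntegral_Icc_eq_intervalIntegral hs.1 _

theorem simplexIntegral_clm_comp [CompleteSpace E] [CompleteSpace F] (L : E →L[ℝ] F)
    {f : ℝ → ℝ → ℝ → E} (hf : Continuous fun p : ℝ × ℝ × ℝ => f p.1 p.2.1 p.2.2) :
    simplexIntegral (fun t s r => L (f t s r)) = L (simplexIntegral f) := by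
  have hf₁ : Continuous fun p : ℝ × ℝ => ∫ r in (0 : ℝ)..p.2, f p.1 p.2 r :=
    intervalIntegral.continuous_parametric_intervalIntegral_of_continuous
      (f := fun (p : ℝ × ℝ) r => f p.1 p.2 r)
      (hf.comp (by fun_prop : Continuous fun q : (ℝ × ℝ) × ℝ => (q.1.1, q.1.2, q.2)))
      continuous_snd
  have hf₂ : Continuous fun t => ∫ s in (0 : ℝ)..t, ∫ r in (0 : ℝ)..s, f t s r :=
    intervalIntegral.continuous_parametric_intervalIntegral_of_continuous hf₁ continuous_id
  have hinner (t s : ℝ) : ∫ r in (0 : ℝ)..s, L (f t s r) = L (∫ r in (0 : ℝ)..s, f t s r) :=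
    L.intervalIntegral_comp_comm (Continuous.intervalIntegrable
      (hf.comp (by fun_prop : Continuous fun r : ℝ => (t, s, r))) _ _)
  have hmiddle (t : ℝ) : ∫ s in (0 : ℝ)..t, L (∫ r in (0 : ℝ)..s, f t s r) =
      L (∫ s in (0 : ℝ)..t, ∫ r in (0 : ℝ)..s, f t s r) :=
    L.intervalIntegral_comp_comm (Continuous.intervalIntegrable
      (hf₁.comp (by fun_prop : Continuous fun s : ℝ => (t, s))) _ _)
  simp only [simplexIntegral_eq_intervalIntegral, hinner, hmiddle]
  exact L.intervalIntegral_comp_comm (hf₂.intervalIntegrable _ _)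

theorem simplexIntegral_apply {κ : Type*} [Fintype κ] [CompleteSpace E] {f : ℝ → ℝ → ℝ → κ → E}
    (hf : Continuous fun p : ℝ × ℝ × ℝ => f p.1 p.2.1 p.2.2) (k : κ) :
    simplexIntegral f k = simplexIntegral fun t s r => f t s r k :=
  (simplexIntegral_clm_comp (ContinuousLinearMap.proj (R := ℝ) (φ := fun _ : κ => E) k) hf).symm

theorem simplexIntegral_clm_matrix {ι κ : Type*} [Finite ι] [Finite κ] [CompleteSpace E]
    [CompleteSpace F] (L : Matrix ι κ E →L[ℝ] F) {f : ℝ → ℝ → ℝ → Matrix ι κ E}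
    (hf : Continuous fun p : ℝ × ℝ × ℝ => f p.1 p.2.1 p.2.2) :
    simplexIntegral (fun t s r => L (f t s r)) =
      L (Matrix.of fun i j => simplexIntegral fun t s r => f t s r i j) := by
  cases nonempty_fintype ι
  cases nonempty_fintype κ
  have hentries : (Matrix.of fun i j => simplexIntegral fun t s r => f t s r i j) =
      simplexIntegral (E := ι → κ → E) f := by
    ext i j
    rw [Matrix.of_apply, simplexIntegral_apply (E := κ → E) hf i,
      simplexIntegral_apply (f := fun t s r => f t s r i) ((continuous_apply i).comp hf) j]
  rw [hentries]
  exact simplexIntegral_clm_comp (E := ι → κ → E) L hf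

end SimplexIntegral

theorem simplexIntegral_one : simplexIntegral (fun _ _ _ => (1 : ℝ)) = 1 / 6 := by
  norm_num [simplexIntegral_eq_intervalIntegral]

theorem integral_exp_mul_add {c : ℝ} (hc : c ≠ 0) (u v d : ℝ) :
    ∫ x in u..v, Real.exp (c * x + d) = (Real.exp (c * v + d) - Real.exp (c * u + d)) / c := by
  rw [intervalIntegral.integral_comp_mul_add _ hc, integral_exp, smul_eq_mul, inv_mul_eq_div]

theorem exp_neg_two_mul_eq_mul (a : ℝ) :
    Real.exp (-2 * a) = Real.exp (-a) * Real.exp (-a) := by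
  rw [← Real.exp_add]
  ring_nf

theorem integral_exp_neg_two_mul {a : ℝ} (ha : a ≠ 0) :
    ∫ t in (0 : ℝ)..1, Real.exp (-2 * t * a) = Real.exp (-a) * Real.sinh a / a := by
  have h := integral_exp_mul_add (mul_ne_zero (by norm_num : (-2 : ℝ) ≠ 0) ha) 0 1 0
  simp only [add_zero, mul_zero, mul_one, Real.exp_zero] at h
  have hone : Real.exp (-a) * Real.exp a = 1 := by
    rw [← Real.exp_add, neg_add_cancel, Real.exp_zero]
  simp only [mul_right_comm (-2 : ℝ) _ a, h, Real.sinh_eq, exp_neg_two_mul_eq_mul]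
  field_simp
  linear_combination -hone

theorem integral_integral_exp {a : ℝ} (ha : a ≠ 0) (t : ℝ) :
    ∫ s in (0 : ℝ)..t, ∫ r in (0 : ℝ)..s, Real.exp (2 * (s - t - r) * a) =
      (1 - Real.exp (-2 * a * t)) / (2 * a) ^ 2 - t * Real.exp (-2 * a * t) / (2 * a) := by
  have h2a : 2 * a ≠ 0 := mul_ne_zero two_ne_zero ha
  have hinner (s : ℝ) : ∫ r in (0 : ℝ)..s, Real.exp (2 * (s - t - r) * a) =
      (Real.exp (2 * a * s + -2 * a * t) - Real.exp (-2 * a * t)) / (2 * a) := by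
    have hexponent (r : ℝ) : 2 * (s - t - r) * a = -(2 * a) * r + 2 * (s - t) * a := by ring
    simp only [hexponent, integral_exp_mul_add (neg_ne_zero.2 h2a)]
    ring_nf
  have hcancel : 2 * a * t + -2 * a * t = 0 := by ring
  simp only [hinner]
  rw [intervalIntegral.integral_div, intervalIntegral.integral_sub
    (Continuous.intervalIntegrable (by fun_prop) _ _) intervalIntegrable_const,
    integral_exp_mul_add h2a, intervalIntegral.integral_const, smul_eq_mul, hcancel,
    Real.exp_zero, mul_zero, zero_add, sub_zero]
  field

theorem simplexIntegral_exp {a : ℝ} (ha : a ≠ 0) :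
    simplexIntegral (fun t s r => Real.exp (2 * (s - t - r) * a)) =
      Real.exp (-a) * (a * Real.cosh a - Real.sinh a) / (2 * a ^ 3) := by
  have hprim (t : ℝ) : HasDerivAt
      (fun t => (t + t * Real.exp (-2 * a * t)) / (2 * a) ^ 2
        + 2 * Real.exp (-2 * a * t) / (2 * a) ^ 3)
      ((1 - Real.exp (-2 * a * t)) / (2 * a) ^ 2 - t * Real.exp (-2 * a * t) / (2 * a)) t := by
    have hexp : HasDerivAt (fun t => Real.exp (-2 * a * t))
        (Real.exp (-2 * a * t) * (-2 * a)) t := (hasDerivAt_const_mul _).exp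
    convert! (((hasDerivAt_id t).add ((hasDerivAt_id t).mul hexp)).div_const ((2 * a) ^ 2)).add
      ((hexp.const_mul 2).div_const ((2 * a) ^ 3)) using 1
    simp only [id]
    field
  have hone : Real.exp (-a) * Real.exp a = 1 := by
    rw [← Real.exp_add, neg_add_cancel, Real.exp_zero]
  simp only [simplexIntegral_eq_intervalIntegral, integral_integral_exp ha]
  rw [intervalIntegral.integral_eq_sub_of_hasDerivAt (fun t _ => hprim t)
    (Continuous.intervalIntegrable (by fun_prop) _ _), mul_one, exp_neg_two_mul_eq_mul,
    Real.cosh_eq, Real.sinh_eq]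
  simp only [mul_zero, Real.exp_zero]
  field_simp
  linear_combination (1 - a) * hone

theorem hasSum_inv_add_pi_mul_sq {z : ℂ} (hz : Complex.sinh z ≠ 0) :
    HasSum (fun n : ℕ => (z * z + (Real.pi * ((n : ℂ) + 1)) ^ 2)⁻¹)
      ((z * Complex.cosh z / Complex.sinh z - 1) / (2 * z ^ 2)) := by
  set w : ℂ := z * Complex.I / Real.pi with hw
  have hpi : (Real.pi : ℂ) ≠ 0 := by exact_mod_cast Real.pi_ne_zero
  have hz0 : z ≠ 0 := by rintro rfl; simp at hz
  have hπw : Real.pi * w = z * Complex.I := by rw [hw]; field_simp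
  have hwc : w ∈ Complex.integerComplement := by
    rintro ⟨k, hk⟩
    have : Complex.sin (Real.pi * w) = 0 := by rw [← hk, mul_comm, Complex.sin_int_mul_pi]
    simp [hπw, Complex.sin_mul_I, hz] at this
  have h := (summable_cotTerm hwc).hasSum_iff_tendsto_nat.2 (tendsto_logDeriv_euler_cot_sub hwc)
  have hterm (n : ℕ) : cotTerm w n * (Complex.I / (2 * z * Real.pi)) =
      (z * z + (Real.pi * ((n : ℂ) + 1)) ^ 2)⁻¹ := by
    rw [cotTerm_identity hwc]
    have hden : (w + (n + 1)) * (w - (n + 1)) =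
        -(z * z + (Real.pi * ((n : ℂ) + 1)) ^ 2) / Real.pi ^ 2 := by
      rw [hw]
      field_simp
      linear_combination z ^ 2 * Complex.I_sq
    rw [hden, hw]
    field_simp
    linear_combination (-(z ^ 2 + Real.pi ^ 2 * ((n : ℂ) + 1) ^ 2)⁻¹) * Complex.I_sq
  have hval : (Real.pi * Complex.cot (Real.pi * w) - 1 / w) * (Complex.I / (2 * z * Real.pi)) =
      (z * Complex.cosh z / Complex.sinh z - 1) / (2 * z ^ 2) := by
    rw [hπw, Complex.cot_eq_cos_div_sin, Complex.sin_mul_I, Complex.cos_mul_I, hw]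
    field_simp
  simpa only [hterm, hval] using h.mul_right (Complex.I / (2 * z * Real.pi))

theorem hasSum_inv_add_pi_mul_sq_real {a : ℝ} (ha : a ≠ 0) :
    HasSum (fun n : ℕ => (a * a + (Real.pi * ((n : ℝ) + 1)) ^ 2)⁻¹)
      ((a * Real.cosh a / Real.sinh a - 1) / (2 * a ^ 2)) := by
  have hsinh : Complex.sinh a ≠ 0 := by
    rw [← Complex.ofReal_sinh]; exact_mod_cast Real.sinh_ne_zero.2 ha
  exact_mod_cast hasSum_inv_add_pi_mul_sq hsinh

theorem hasSum_inv_pi_mul_sq :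
    HasSum (fun n : ℕ => ((Real.pi * ((n : ℝ) + 1)) ^ 2)⁻¹) (1 / 6) := by
  have h := ((hasSum_nat_add_iff' 1).2 hasSum_zeta_two).mul_left (Real.pi ^ 2)⁻¹
  simp only [Nat.cast_add, Nat.cast_one, one_div, ← mul_inv, ← mul_pow] at h
  convert! h using 1
  rw [Finset.sum_range_one, Nat.cast_zero]
  field

theorem hasSum_inv_add_pi_mul_sq_eq_simplexIntegral (a : ℝ) :
    HasSum (fun n : ℕ => (a * a + (Real.pi * ((n : ℝ) + 1)) ^ 2)⁻¹)
      (simplexIntegral (fun t s r => Real.exp (2 * (s - t - r) * a)) *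
        (∫ t in Set.Icc (0 : ℝ) 1, Real.exp (-2 * t * a))⁻¹) := by
  rcases eq_or_ne a 0 with rfl | ha
  · simpa [simplexIntegral_one] using hasSum_inv_pi_mul_sq
  · have hsinh : Real.sinh a ≠ 0 := Real.sinh_ne_zero.2 ha
    convert! hasSum_inv_add_pi_mul_sq_real ha using 1
    rw [simplexIntegral_exp ha, setIntegral_Icc_eq_intervalIntegral zero_le_one,
      integral_exp_neg_two_mul ha]
    field [Real.exp_ne_zero]

theorem setIntegral_exp_neg_two_mul_pos (a : ℝ) :
    0 < ∫ t in Set.Icc (0 : ℝ) 1, Real.exp (-2 * t * a) := by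
  rw [setIntegral_Icc_eq_intervalIntegral zero_le_one]
  exact intervalIntegral.intervalIntegral_pos_of_pos
    (Continuous.intervalIntegrable (by fun_prop) _ _) (fun _ => Real.exp_pos _) zero_lt_one

section SpectralCalculus

variable {𝕜 ι : Type*} [RCLike 𝕜] [Fintype ι] [DecidableEq ι] {A : Matrix ι ι 𝕜}

/-- The functional calculus of a Hermitian matrix as a continuous linear map on the values at the
eigenvalues: `v` is sent to `U * diagonal v * U⋆`, with `U` the unitary of eigenvectors. Being
linear on a finite-dimensional space, it commutes with limits and integrals. -/
def spectralCLM (hA : A.IsHermitian) : (ι → ℝ) →L[ℝ] Matrix ι ι 𝕜 :=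
  LinearMap.toContinuousLinearMap <|
    (Unitary.conjStarAlgAut 𝕜 _ hA.eigenvectorUnitary).toAlgEquiv.toLinearMap.restrictScalars ℝ ∘ₗ
      Matrix.diagonalLinearMap ι ℝ 𝕜 ∘ₗ (RCLike.ofRealCLM (K := 𝕜)).toLinearMap.compLeft ι

theorem cfc_eq_spectralCLM (hA : A.IsHermitian) (f : ℝ → ℝ) :
    cfc f A = spectralCLM hA (fun k => f (hA.eigenvalues k)) := by
  rw [hA.cfc_eq]
  rfl

theorem hasSum_cfc {κ : Type*} (hA : A.IsHermitian) {f : κ → ℝ → ℝ} {g : ℝ → ℝ}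
    (hfg : ∀ x ∈ spectrum ℝ A, HasSum (fun n => f n x) (g x)) :
    HasSum (fun n => cfc (f n) A) (cfc g A) := by
  simp only [cfc_eq_spectralCLM hA]
  exact (spectralCLM hA).hasSum (Pi.hasSum.2 fun k => hfg _ (hA.eigenvalues_mem_spectrum_real k))

theorem simplexIntegral_clm_cfc (hA : A.IsHermitian) {F : Type*} [NormedAddCommGroup F]
    [NormedSpace ℝ F] [CompleteSpace F] (L : Matrix ι ι 𝕜 →L[ℝ] F) {f : ℝ → ℝ → ℝ → ℝ → ℝ}
    (hf : ∀ x ∈ spectrum ℝ A, Continuous fun p : ℝ × ℝ × ℝ => f p.1 p.2.1 p.2.2 x) :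
    simplexIntegral (fun t s r => L (cfc (f t s r) A)) =
      L (cfc (fun x => simplexIntegral fun t s r => f t s r x) A) := by
  have hcont : Continuous fun p : ℝ × ℝ × ℝ => fun k => f p.1 p.2.1 p.2.2 (hA.eigenvalues k) :=
    continuous_pi fun k => hf _ (hA.eigenvalues_mem_spectrum_real k)
  simp only [cfc_eq_spectralCLM hA]
  refine (simplexIntegral_clm_comp (L ∘L spectralCLM hA) hcont).trans ?_
  exact congrArg (L ∘L spectralCLM hA) (funext fun k =>
    simplexIntegral_apply (f := fun t s r k => f t s r (hA.eigenvalues k)) hcont k)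

theorem of_integral_cfc (hA : A.IsHermitian) {α : Type*} [MeasurableSpace α] {μ : Measure α}
    {f : α → ℝ → ℝ} (hf : ∀ x ∈ spectrum ℝ A, Integrable (fun t => f t x) μ) :
    (Matrix.of fun i j => ∫ t, cfc (f t) A i j ∂μ) = cfc (fun x => ∫ t, f t x ∂μ) A := by
  have heigen (k : ι) : Integrable (fun t => f t (hA.eigenvalues k)) μ :=
    hf _ (hA.eigenvalues_mem_spectrum_real k)
  ext i j
  let entry : Matrix ι ι 𝕜 →L[ℝ] 𝕜 := (Matrix.entryLinearMap ℝ 𝕜 i j).toContinuousLinearMap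
  simp only [cfc_eq_spectralCLM hA]
  refine ((entry ∘L spectralCLM hA).integral_comp_comm (.of_eval heigen)).trans ?_
  exact congrArg (entry ∘L spectralCLM hA) (funext fun k =>
    eval_integral (f := fun t k => f t (hA.eigenvalues k)) heigen k)

theorem inv_cfc (hA : A.IsHermitian) {f : ℝ → ℝ} (hf : ∀ x ∈ spectrum ℝ A, f x ≠ 0) :
    (cfc f A)⁻¹ = cfc (fun x => (f x)⁻¹) A := by
  rw [Matrix.nonsing_inv_eq_ringInverse,
    cfc_inv f A hf (Matrix.finite_real_spectrum.continuousOn f) hA.isSelfAdjoint]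

theorem exp_smul_eq_cfc (hA : A.IsHermitian) (s : ℝ) :
    NormedSpace.exp (s • A) = cfc (fun x => Real.exp (s * x)) A := by
  have hterm (n : ℕ) : (n.factorial⁻¹ : ℝ) • (s • A) ^ n =
      cfc (fun x => (n.factorial⁻¹ : ℝ) * (s * x) ^ n) A := by
    rw [cfc_const_mul _ _ A (by fun_prop), cfc_pow _ n A (by fun_prop) hA.isSelfAdjoint,
      cfc_const_mul_id s A hA.isSelfAdjoint]
  have hexp (x : ℝ) : HasSum (fun n : ℕ => (n.factorial⁻¹ : ℝ) * (s * x) ^ n)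
      (Real.exp (s * x)) := by
    simpa only [Real.exp_eq_exp_ℝ, smul_eq_mul]
      using NormedSpace.exp_series_hasSum_exp' (𝕂 := ℝ) (s * x)
  simp only [NormedSpace.exp_eq_tsum ℝ, hterm]
  exact (hasSum_cfc hA fun x _ => hexp x).tsum_eq

theorem mul_self_add_smul_one_eq_cfc (hA : A.IsHermitian) (c : ℝ) :
    A * A + c • (1 : Matrix ι ι 𝕜) = cfc (fun x => x * x + c) A := by
  rw [cfc_add_const c (fun x => x * x) A (by fun_prop) hA.isSelfAdjoint,
    cfc_mul (fun x => x) (fun x => x) A, cfc_id' ℝ A hA.isSelfAdjoint,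
    Algebra.algebraMap_eq_smul_one]

theorem continuous_exp_smul {X : Type*} [TopologicalSpace X] (hA : A.IsHermitian) {c : X → ℝ}
    (hc : Continuous c) : Continuous fun x => NormedSpace.exp (c x • A) := by
  simp only [exp_smul_eq_cfc hA, cfc_eq_spectralCLM hA]
  exact (spectralCLM hA).continuous.comp (by fun_prop)

theorem trace_exp_mul_mul_exp_mul_cfc (hA : A.IsHermitian) (R : Matrix ι ι 𝕜) (g : ℝ → ℝ)
    (t s r : ℝ) :
    (NormedSpace.exp ((s - 2 * t) • A) * R * NormedSpace.exp ((s - 2 * r) • A) * cfc g A).trace =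
      (R * cfc (fun x => Real.exp (2 * (s - t - r) * x) * g x) A).trace := by
  have hcont (f : ℝ → ℝ) : ContinuousOn f (spectrum ℝ A) :=
    Matrix.finite_real_spectrum.continuousOn f
  rw [Matrix.mul_assoc, Matrix.mul_assoc, Matrix.trace_mul_comm, Matrix.mul_assoc,
    exp_smul_eq_cfc hA, exp_smul_eq_cfc hA, ← cfc_mul _ _ A (hcont _) (hcont _),
    ← cfc_mul _ _ A (hcont _) (hcont _)]
  congr 3
  ext x
  rw [mul_right_comm, ← Real.exp_add]
  ring_nf

theorem trace_simplexIntegral_exp_mul_cfc (hA : A.IsHermitian) (R : Matrix ι ι 𝕜) (g : ℝ → ℝ) :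
    ((Matrix.of fun i j => simplexIntegral fun t s r =>
        (NormedSpace.exp ((s - 2 * t) • A) * R * NormedSpace.exp ((s - 2 * r) • A)) i j) *
      cfc g A).trace =
      (R * cfc (fun x => simplexIntegral (fun t s r => Real.exp (2 * (s - t - r) * x)) * g x)
        A).trace := by
  let traceMul : Matrix ι ι 𝕜 →L[ℝ] 𝕜 := LinearMap.toContinuousLinearMap
    (Matrix.traceLinearMap ι ℝ 𝕜 ∘ₗ LinearMap.mulRight ℝ (cfc g A))
  let mulTrace : Matrix ι ι 𝕜 →L[ℝ] 𝕜 := LinearMap.toContinuousLinearMap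
    (Matrix.traceLinearMap ι ℝ 𝕜 ∘ₗ LinearMap.mulLeft ℝ R)
  have hint : Continuous fun p : ℝ × ℝ × ℝ => NormedSpace.exp ((p.2.1 - 2 * p.1) • A) * R *
      NormedSpace.exp ((p.2.1 - 2 * p.2.2) • A) :=
    ((continuous_exp_smul hA (by fun_prop)).mul continuous_const).mul
      (continuous_exp_smul hA (by fun_prop))
  have hmatrix := simplexIntegral_clm_matrix traceMul (f := fun t s r =>
    NormedSpace.exp ((s - 2 * t) • A) * R * NormedSpace.exp ((s - 2 * r) • A)) hint
  have hcfc := simplexIntegral_clm_cfc hA mulTrace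
    (f := fun t s r x => Real.exp (2 * (s - t - r) * x) * g x) (fun x _ => by fun_prop)
  have hscalar (x : ℝ) :
      simplexIntegral (fun t s r => Real.exp (2 * (s - t - r) * x) * g x) =
      simplexIntegral (fun t s r => Real.exp (2 * (s - t - r) * x)) * g x :=
    simplexIntegral_clm_comp ((ContinuousLinearMap.mul ℝ ℝ).flip (g x))
      (f := fun t s r => Real.exp (2 * (s - t - r) * x)) (by fun_prop)
  simp only [hscalar] at hcfc
  refine hmatrix.symm.trans (Eq.trans ?_ hcfc)
  congr! 4 with t s r
  exact trace_exp_mul_mul_exp_mul_cfc hA R g t s r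

end SpectralCalculus

theorem euler_trace_identity_general {𝕜 ι : Type*} [RCLike 𝕜] [Fintype ι] [DecidableEq ι]
    (A R : Matrix ι ι 𝕜) (hA : A.IsHermitian) :
    HasSum (fun n : ℕ =>
        (R * (A * A + ((Real.pi * ((n : ℝ) + 1)) ^ 2) • (1 : Matrix ι ι 𝕜))⁻¹).trace)
      ((Matrix.of fun i j =>
          ∫ t in Set.Icc (0 : ℝ) 1, ∫ τ₂ in Set.Icc (0 : ℝ) t, ∫ τ₁ in Set.Icc (0 : ℝ) τ₂,
            (NormedSpace.exp ((τ₂ - 2 * t) • A) * R * NormedSpace.exp ((τ₂ - 2 * τ₁) • A)) i j) *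
        (Matrix.of fun i j =>
          ∫ t in Set.Icc (0 : ℝ) 1, NormedSpace.exp ((-2 * t) • A) i j)⁻¹).trace := by
  have hN : (Matrix.of fun i j => ∫ t in Set.Icc (0 : ℝ) 1, NormedSpace.exp ((-2 * t) • A) i j) =
      cfc (fun x => ∫ t in Set.Icc (0 : ℝ) 1, Real.exp (-2 * t * x)) A := by
    simp only [exp_smul_eq_cfc hA]
    exact of_integral_cfc hA fun x _ => Continuous.integrableOn_Icc (by fun_prop)
  have hterm (n : ℕ) : (A * A + ((Real.pi * ((n : ℝ) + 1)) ^ 2) • (1 : Matrix ι ι 𝕜))⁻¹ =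
      cfc (fun x => (x * x + (Real.pi * ((n : ℝ) + 1)) ^ 2)⁻¹) A := by
    rw [mul_self_add_smul_one_eq_cfc hA, inv_cfc hA fun x _ =>
      (add_pos_of_nonneg_of_pos (mul_self_nonneg x) (by positivity)).ne']
  rw [hN, inv_cfc hA fun x _ => (setIntegral_exp_neg_two_mul_pos x).ne']
  simp only [hterm]
  have hsum := hasSum_cfc hA fun x _ => hasSum_inv_add_pi_mul_sq_eq_simplexIntegral x
  exact trace_simplexIntegral_exp_mul_cfc hA R _ ▸
    (hsum.mul_left R).map (Matrix.traceAddMonoidHom ι 𝕜) continuous_id.matrix_trace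

theorem mExp_eq_exp {m : ℕ} (M : Matrix (Fin m) (Fin m) ℝ) : mExp M = NormedSpace.exp M := by
  rw [NormedSpace.exp_eq_tsum ℝ, mExp]

/-- **Proposition 2, trace identity.**  For symmetric `A, R`,
`∑_{n=1}^∞ tr(R (A² + (πn)² I)⁻¹)
  = tr( (∭_{0≤τ₁≤τ₂≤t≤1} e^{(τ₂-2t)A} R e^{(τ₂-2τ₁)A} dτ₂ dτ₁ dt) (∫₀¹ e^{-2tA} dt)⁻¹ )`,
and in particular the series converges. -/
theorem euler_trace_identity
    (m : ℕ) (A R : Matrix (Fin m) (Fin m) ℝ)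
    (hA : A.IsSymm) (hR : R.IsSymm) :
    Tendsto (fun N : ℕ => ∑ n ∈ Finset.range N,
        (R * (A * A + ((Real.pi * ((n : ℝ) + 1)) ^ 2) • (1 : Matrix (Fin m) (Fin m) ℝ))⁻¹).trace)
      atTop
      (𝓝 (((Matrix.of fun i j =>
          ∫ t in Set.Icc (0:ℝ) 1, ∫ τ₂ in Set.Icc (0:ℝ) t, ∫ τ₁ in Set.Icc (0:ℝ) τ₂,
            (mExp ((τ₂ - 2 * t) • A) * R * mExp ((τ₂ - 2 * τ₁) • A)) i j) *
        (mSetIntegral (Set.Icc (0:ℝ) 1) (fun t => mExp ((-2 * t) • A)))⁻¹).trace)) := by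
  simp only [mExp_eq_exp, mSetIntegral]
  exact (euler_trace_identity_general A R
    ((conjTranspose_eq_transpose_of_trivial A).trans hA)).tendsto_sum_nat

end
end

section
/- Let A and R be real symmetric m×m matrices with A·R = R·A and A invertible. Then ∑_{n=1}^∞ tr( R·(A² + (πn)² I)⁻¹ ) = (1/2)·tr( R·( A·cosh(A)·(sinh A)⁻¹ − I )·A⁻² ), where cosh A = (exp A + exp(−A))/2 and sinh A = (exp A − exp(−A))/2 (sinh A is invertible since A is symmetric and invertible); in particular the series converges. -/
open MeasureTheory Filter Topology Matrix

noncomputable section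

/-!
By the continuous functional calculus, a partial fraction expansion of a scalar function that
converges uniformly on the spectrum of a self-adjoint element holds for the element itself. The
expansion here is `(x coth x - 1) / x² = 2 ∑ 1 / (x² + (πn)²)`, which is the Mittag-Leffler
expansion of the cotangent at `i x / π`; it converges uniformly on `ℝ` because its terms are at most
`1 / (πn)²`. Applying the continuous linear functional `X ↦ tr (R X)` gives the trace identity.
-/

section Scalar

lemma ne_zero_of_sinh_ne_zero {z : ℂ} (hz : Complex.sinh z ≠ 0) : z ≠ 0 := by
  rintro rfl
  exact hz Complex.sinh_zero

lemma mul_I_div_pi_mem_integerComplement {z : ℂ} (hz : Complex.sinh z ≠ 0) :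
    z * Complex.I / Real.pi ∈ Complex.integerComplement := by
  rintro ⟨k, hk⟩
  have hzI : z * Complex.I = k * Real.pi :=
    ((eq_div_iff (Complex.ofReal_ne_zero.mpr Real.pi_ne_zero)).mp hk).symm
  apply hz
  rw [← mul_eq_zero_iff_right Complex.I_ne_zero, ← Complex.sin_mul_I, hzI, Complex.sin_int_mul_pi]

lemma cotTerm_mul_I_div_pi {z : ℂ} (hz : Complex.sinh z ≠ 0) (n : ℕ) :
    cotTerm (z * Complex.I / Real.pi) n =
      -2 * Complex.I * z * Real.pi * (z ^ 2 + (Real.pi * (n + 1)) ^ 2)⁻¹ := by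
  have hpi : (Real.pi : ℂ) ≠ 0 := Complex.ofReal_ne_zero.mpr Real.pi_ne_zero
  have hfactor : (z * Complex.I / Real.pi + (n + 1)) * (z * Complex.I / Real.pi - (n + 1)) =
      -(z ^ 2 + (Real.pi * (n + 1)) ^ 2) / Real.pi ^ 2 := by
    field_simp
    linear_combination z ^ 2 * Complex.I_sq
  rw [cotTerm_identity (mul_I_div_pi_mem_integerComplement hz), hfactor, one_div_div,
    div_neg, div_eq_mul_inv]
  field_simp

lemma pi_mul_cot_sub_one_div_mul_I_div_pi {z : ℂ} (hz : Complex.sinh z ≠ 0) :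
    Real.pi * Complex.cot (Real.pi * (z * Complex.I / Real.pi)) - 1 / (z * Complex.I / Real.pi) =
      -2 * Complex.I * z * Real.pi *
        (1 / 2 * ((z * Complex.cosh z * (Complex.sinh z)⁻¹ - 1) * (z ^ 2)⁻¹)) := by
  have hpi : (Real.pi : ℂ) ≠ 0 := Complex.ofReal_ne_zero.mpr Real.pi_ne_zero
  have hz0 : z ≠ 0 := ne_zero_of_sinh_ne_zero hz
  rw [mul_div_cancel₀ _ hpi, Complex.cot, Complex.cos_mul_I, Complex.sin_mul_I]
  field_simp
  linear_combination (z * Complex.cosh z - Complex.sinh z) * Complex.I_sq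

theorem hasSum_complex_inv_sq_add_pi_mul_sq {z : ℂ} (hz : Complex.sinh z ≠ 0) :
    HasSum (fun n : ℕ => (z ^ 2 + (Real.pi * (n + 1)) ^ 2)⁻¹)
      (1 / 2 * ((z * Complex.cosh z * (Complex.sinh z)⁻¹ - 1) * (z ^ 2)⁻¹)) := by
  have hmem := mul_I_div_pi_mem_integerComplement hz
  have hcot : HasSum (cotTerm (z * Complex.I / Real.pi))
      (Real.pi * Complex.cot (Real.pi * (z * Complex.I / Real.pi)) -
        1 / (z * Complex.I / Real.pi)) :=
    (summable_cotTerm hmem).hasSum_iff_tendsto_nat.mpr (tendsto_logDeriv_euler_cot_sub hmem)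
  have hscale : -2 * Complex.I * z * Real.pi ≠ 0 := by
    simp [ne_zero_of_sinh_ne_zero hz, Real.pi_ne_zero]
  rw [funext (cotTerm_mul_I_div_pi hz), pi_mul_cot_sub_one_div_mul_I_div_pi hz] at hcot
  exact (hasSum_mul_left_iff hscale).mp hcot

theorem hasSum_real_inv_sq_add_pi_mul_sq {x : ℝ} (hx : x ≠ 0) :
    HasSum (fun n : ℕ => (x ^ 2 + (Real.pi * (n + 1)) ^ 2)⁻¹)
      (1 / 2 * ((x * Real.cosh x * (Real.sinh x)⁻¹ - 1) * (x ^ 2)⁻¹)) := by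
  have hsinh : Complex.sinh x ≠ 0 := by
    rw [← Complex.ofReal_sinh]
    exact Complex.ofReal_ne_zero.mpr (Real.sinh_ne_zero.mpr hx)
  rw [← Complex.hasSum_ofReal]
  push_cast
  exact hasSum_complex_inv_sq_add_pi_mul_sq hsinh

lemma sq_add_pi_mul_sq_pos (x : ℝ) (n : ℕ) : 0 < x ^ 2 + (Real.pi * (n + 1)) ^ 2 := by
  positivity

theorem hasSumUniformlyOn_inv_sq_add_pi_mul_sq {s : Set ℝ} (hs : 0 ∉ s) :
    HasSumUniformlyOn (fun (n : ℕ) x => (x ^ 2 + (Real.pi * (n + 1)) ^ 2)⁻¹)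
      (fun x => 1 / 2 * ((x * Real.cosh x * (Real.sinh x)⁻¹ - 1) * (x ^ 2)⁻¹)) s := by
  have hsummable : Summable fun n : ℕ => ((Real.pi * ((n : ℝ) + 1)) ^ 2)⁻¹ := by
    simpa [mul_pow, mul_comm] using
      ((summable_nat_add_iff 1).mpr (Real.summable_nat_pow_inv.mpr one_lt_two)).mul_left
        (Real.pi ^ 2)⁻¹
  refine (HasSumUniformlyOn.of_norm_le_summable hsummable fun n x _ => ?_).congr_right
    fun x hx => (hasSum_real_inv_sq_add_pi_mul_sq (ne_of_mem_of_not_mem hx hs)).tsum_eq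
  rw [Real.norm_of_nonneg (inv_nonneg.mpr (sq_add_pi_mul_sq_pos x n).le)]
  gcongr
  exact le_add_of_nonneg_left (sq_nonneg x)

lemma continuousOn_mul_coth {s : Set ℝ} (hs : ∀ x ∈ s, Real.sinh x ≠ 0) :
    ContinuousOn (fun x => x * Real.cosh x * (Real.sinh x)⁻¹) s :=
  (continuous_id.mul Real.continuous_cosh).continuousOn.mul
    (Real.continuous_sinh.continuousOn.inv₀ hs)

end Scalar

section FunctionalCalculus

open scoped Ring

theorem hasSum_cfc_of_hasSumUniformlyOn {ι 𝕜 B : Type*} {p : B → Prop} [CommSemiring 𝕜]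
    [StarRing 𝕜] [MetricSpace 𝕜] [IsTopologicalSemiring 𝕜] [ContinuousStar 𝕜] [Ring B] [StarRing B]
    [TopologicalSpace B] [Algebra 𝕜 B] [ContinuousFunctionalCalculus 𝕜 B p] {f : ι → 𝕜 → 𝕜}
    {g : 𝕜 → 𝕜} {a : B} (hsum : HasSumUniformlyOn f g (spectrum 𝕜 a))
    (hf : ∀ i, ContinuousOn (f i) (spectrum 𝕜 a)) :
    HasSum (fun i => cfc (f i) a) (cfc g a) := by
  have hlim := tendsto_cfc_fun hsum.tendstoUniformlyOn
    (.of_forall fun t => continuousOn_finsetSum t fun i _ => hf i)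
  refine hlim.congr fun t => ?_
  rw [← cfc_sum f a t fun i _ => hf i, Finset.sum_fn]

variable {B : Type*} [Ring B] [StarRing B] [TopologicalSpace B] [Algebra ℝ B]
  [ContinuousFunctionalCalculus ℝ B IsSelfAdjoint] {a : B}

lemma cfc_inv_sq_add_pi_mul_sq (ha : IsSelfAdjoint a) (n : ℕ) :
    cfc (fun x : ℝ => (x ^ 2 + (Real.pi * (n + 1)) ^ 2)⁻¹) a =
      (a ^ 2 + algebraMap ℝ B ((Real.pi * (n + 1)) ^ 2))⁻¹ʳ := by
  rw [cfc_inv _ a fun x _ => (sq_add_pi_mul_sq_pos x n).ne', cfc_add_const .., cfc_pow_id ..]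

lemma cfc_mul_coth (ha : IsSelfAdjoint a) (hsinh : ∀ x ∈ spectrum ℝ a, Real.sinh x ≠ 0) :
    cfc (fun x : ℝ => x * Real.cosh x * (Real.sinh x)⁻¹) a =
      a * cfc Real.cosh a * (cfc Real.sinh a)⁻¹ʳ := by
  have hcosh : ContinuousOn Real.cosh (spectrum ℝ a) := Real.continuous_cosh.continuousOn
  have hsinh_cont : ContinuousOn Real.sinh (spectrum ℝ a) := Real.continuous_sinh.continuousOn
  rw [cfc_mul _ _ a ((continuousOn_id' _).fun_mul hcosh) (hsinh_cont.fun_inv₀ hsinh),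
    cfc_mul _ _ a (continuousOn_id' _) hcosh, cfc_id' .., cfc_inv _ a hsinh hsinh_cont]

lemma cfc_mul_coth_sub_one_mul_inv_sq (ha : IsSelfAdjoint a) (hunit : IsUnit a) :
    cfc (fun x : ℝ => 1 / 2 * ((x * Real.cosh x * (Real.sinh x)⁻¹ - 1) * (x ^ 2)⁻¹)) a =
      (1 / 2 : ℝ) • ((a * cfc Real.cosh a * (cfc Real.sinh a)⁻¹ʳ - 1) * (a ^ 2)⁻¹ʳ) := by
  have hne : ∀ x ∈ spectrum ℝ a, x ≠ 0 :=
    fun x hx => ne_of_mem_of_not_mem hx (spectrum.zero_notMem ℝ hunit)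
  have hsinh : ∀ x ∈ spectrum ℝ a, Real.sinh x ≠ 0 := fun x hx => Real.sinh_ne_zero.mpr (hne x hx)
  have hsq : ∀ x ∈ spectrum ℝ a, x ^ 2 ≠ 0 := fun x hx => pow_ne_zero 2 (hne x hx)
  have hcoth := continuousOn_mul_coth hsinh
  have hnum : ContinuousOn (fun x => x * Real.cosh x * (Real.sinh x)⁻¹ - 1) (spectrum ℝ a) :=
    hcoth.sub continuousOn_const
  have hinv : ContinuousOn (fun x : ℝ => (x ^ 2)⁻¹) (spectrum ℝ a) :=
    (continuous_pow 2).continuousOn.inv₀ hsq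
  rw [cfc_const_mul _ _ a (hnum.fun_mul hinv), cfc_mul _ _ a hnum hinv,
    cfc_sub _ _ a hcoth continuousOn_const, cfc_mul_coth ha hsinh, cfc_const_one ℝ a,
    cfc_inv _ a hsq, cfc_pow_id ..]

theorem hasSum_ringInverse_sq_add_pi_mul_sq (ha : IsSelfAdjoint a) (hunit : IsUnit a) :
    HasSum (fun n : ℕ => (a ^ 2 + algebraMap ℝ B ((Real.pi * (n + 1)) ^ 2))⁻¹ʳ)
      ((1 / 2 : ℝ) • ((a * cfc Real.cosh a * (cfc Real.sinh a)⁻¹ʳ - 1) * (a ^ 2)⁻¹ʳ)) := by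
  rw [← cfc_mul_coth_sub_one_mul_inv_sq ha hunit]
  simp only [← cfc_inv_sq_add_pi_mul_sq ha]
  refine hasSum_cfc_of_hasSumUniformlyOn
    (hasSumUniformlyOn_inv_sq_add_pi_mul_sq (spectrum.zero_notMem ℝ hunit)) fun n => ?_
  exact ContinuousOn.inv₀ (by fun_prop) fun x _ => (sq_add_pi_mul_sq_pos x n).ne'

end FunctionalCalculus

section Matrix

variable {m : ℕ} {A : Matrix (Fin m) (Fin m) ℝ}

open scoped Matrix.Norms.L2Operator in
lemma mExp_eq_cfc (hA : IsSelfAdjoint A) : mExp A = cfc Real.exp A := by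
  rw [CFC.real_exp_eq_normedSpace_exp hA, NormedSpace.exp_eq_tsum ℝ, mExp]

lemma mExp_neg_eq_cfc (hA : IsSelfAdjoint A) : mExp (-A) = cfc (fun x => Real.exp (-x)) A := by
  rw [mExp_eq_cfc hA.neg, cfc_comp_neg ..]

lemma mCosh_eq_cfc (hA : IsSelfAdjoint A) : mCosh A = cfc Real.cosh A := by
  rw [mCosh, mExp_eq_cfc hA, mExp_neg_eq_cfc hA, ← cfc_add .., ← cfc_const_mul ..]
  exact cfc_congr fun x _ => (inv_mul_eq_div _ _).trans (Real.cosh_eq x).symm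

lemma mSinh_eq_cfc (hA : IsSelfAdjoint A) : mSinh A = cfc Real.sinh A := by
  rw [mSinh, mExp_eq_cfc hA, mExp_neg_eq_cfc hA, ← cfc_sub .., ← cfc_const_mul ..]
  exact cfc_congr fun x _ => (inv_mul_eq_div _ _).trans (Real.sinh_eq x).symm

theorem hasSum_matrix_inv_sq_add_pi_mul_sq (hA : A.IsSymm) (hdet : IsUnit A.det) :
    HasSum (fun n : ℕ => (A * A + ((Real.pi * ((n : ℝ) + 1)) ^ 2) • 1)⁻¹)
      ((1 / 2 : ℝ) • ((A * mCosh A * (mSinh A)⁻¹ - 1) * (A * A)⁻¹)) := by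
  have hself : IsSelfAdjoint A := isHermitian_iff_isSymm.mpr hA
  simpa only [mCosh_eq_cfc hself, mSinh_eq_cfc hself, nonsing_inv_eq_ringInverse, sq,
    Algebra.algebraMap_eq_smul_one] using
    hasSum_ringInverse_sq_add_pi_mul_sq hself ((isUnit_iff_isUnit_det A).mpr hdet)

end Matrix

lemma hasSum_trace_mul {ι n p 𝕜 : Type*} [Fintype n] [Fintype p] [NonUnitalNonAssocSemiring 𝕜]
    [TopologicalSpace 𝕜] [IsTopologicalSemiring 𝕜] (R : Matrix n p 𝕜) {f : ι → Matrix p n 𝕜}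
    {S : Matrix p n 𝕜} (hf : HasSum f S) :
    HasSum (fun i => (R * f i).trace) (R * S).trace :=
  hf.map ((traceAddMonoidHom n 𝕜).comp (addMonoidHomMulLeft R))
    (continuous_const.matrix_mul continuous_id).matrix_trace

theorem euler_trace_identity_commutative_general
    {m : ℕ} {A : Matrix (Fin m) (Fin m) ℝ} (R : Matrix (Fin m) (Fin m) ℝ)
    (hA : A.IsSymm) (hAinv : IsUnit A.det) :
    HasSum (fun n : ℕ =>
        (R * (A * A + ((Real.pi * ((n : ℝ) + 1)) ^ 2) • (1 : Matrix (Fin m) (Fin m) ℝ))⁻¹).trace)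
      ((1 / 2) * (R * (A * mCosh A * (mSinh A)⁻¹ - 1) * (A * A)⁻¹).trace) := by
  simpa only [Matrix.mul_smul, trace_smul, smul_eq_mul, ← mul_assoc] using
    hasSum_trace_mul R (hasSum_matrix_inv_sq_add_pi_mul_sq hA hAinv)

/-- **Commutative case of the trace identity.**  For commuting symmetric `A, R`
with `A` invertible,
`∑_{n=1}^∞ tr(R (A² + (πn)² I)⁻¹) = ½ tr(R (A cosh A (sinh A)⁻¹ - I) A⁻²)`,
and in particular the series converges. -/
theorem euler_trace_identity_commutative
    (m : ℕ) (A R : Matrix (Fin m) (Fin m) ℝ)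
    (hA : A.IsSymm) (hR : R.IsSymm)
    (hcomm : A * R = R * A) (hAinv : IsUnit A.det) :
    Tendsto (fun N : ℕ => ∑ n ∈ Finset.range N,
        (R * (A * A + ((Real.pi * ((n : ℝ) + 1)) ^ 2) • (1 : Matrix (Fin m) (Fin m) ℝ))⁻¹).trace)
      atTop
      (𝓝 ((1 / 2) *
        (R * (A * mCosh A * (mSinh A)⁻¹ - 1) * (A * A)⁻¹).trace)) :=
  (euler_trace_identity_commutative_general R hA hAinv).tendsto_sum_nat

end
end
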